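/- arXiv:1902.03270 — 9 statements merged into one kernel-verified Lean document; each statement's English description precedes it below -/
import Mathlib

section
/- Let X be a locally connected topological space and f : X → ℝ a continuous function. Then for every x ∈ X and every real μ > f(x), the connected component of x in the open sublevel set {f < μ} is equal to the union, over all λ ∈ (f(x), μ), of the connected components of x in {f < λ}. (Lemma 2.2, equation (2.5), of the paper.) -/
/-!
Let `U` be a directed union of open sets `U i` in a locally connected space. Call `y, z ∈ U`
related if they lie in the same component of some `U i`. Directedness makes this relation
transitive, and local connectedness makes its classes open, so every connected subset of `U` lies
in a single class. Hence taking the component of a point commutes with directed unions of open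
sets, and `{f < μ}` is the directed union of the sublevel sets `{f < l}` over `l ∈ (f x, μ)`.
-/

open Set Topology

section ConnectedComponentIn

variable {X : Type*} [TopologicalSpace X]

theorem mem_connectedComponentIn_symm {F : Set X} {x y : X}
    (h : y ∈ connectedComponentIn F x) : x ∈ connectedComponentIn F y := by
  have hx : x ∈ F := connectedComponentIn_nonempty_iff.1 ⟨y, h⟩
  exact connectedComponentIn_eq h ▸ mem_connectedComponentIn hx

theorem mem_connectedComponentIn_trans {F : Set X} {x y z : X}
    (hxy : y ∈ connectedComponentIn F x) (hyz : z ∈ connectedComponentIn F y) :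
    z ∈ connectedComponentIn F x :=
  connectedComponentIn_eq hxy ▸ hyz

variable [LocallyConnectedSpace X] {ι : Sort*} {U : ι → Set X}

theorem exists_mem_connectedComponentIn_of_isPreconnected_of_directed
    (hU : ∀ i, IsOpen (U i)) (hdir : Directed (· ⊆ ·) U) {s : Set X} (hs : IsPreconnected s)
    (hsU : s ⊆ ⋃ i, U i) {x y : X} (hx : x ∈ s) (hy : y ∈ s) :
    ∃ i, y ∈ connectedComponentIn (U i) x := by
  refine hs.induction₂' (fun a b => ∃ i, b ∈ connectedComponentIn (U i) a) ?_ ?_ hx hy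
  · intro a ha
    obtain ⟨i, hai⟩ := mem_iUnion.1 (hsU ha)
    have near : connectedComponentIn (U i) a ∈ 𝓝[s] a :=
      mem_nhdsWithin_of_mem_nhds (connectedComponentIn_mem_nhds ((hU i).mem_nhds hai))
    filter_upwards [near] with b hb
    exact ⟨⟨i, hb⟩, i, mem_connectedComponentIn_symm hb⟩
  · rintro a b c - - - ⟨i, hab⟩ ⟨j, hbc⟩
    obtain ⟨k, hik, hjk⟩ := hdir i j
    exact ⟨k, mem_connectedComponentIn_trans (connectedComponentIn_mono a hik hab)
      (connectedComponentIn_mono b hjk hbc)⟩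

theorem connectedComponentIn_iUnion_of_directed
    (hU : ∀ i, IsOpen (U i)) (hdir : Directed (· ⊆ ·) U) (x : X) :
    connectedComponentIn (⋃ i, U i) x = ⋃ i, connectedComponentIn (U i) x := by
  refine Subset.antisymm (fun y hy => mem_iUnion.2 ?_)
    (iUnion_subset fun i => connectedComponentIn_mono x (subset_iUnion U i))
  have hx : x ∈ ⋃ i, U i := connectedComponentIn_nonempty_iff.1 ⟨y, hy⟩
  exact exists_mem_connectedComponentIn_of_isPreconnected_of_directed hU hdir
    isPreconnected_connectedComponentIn (connectedComponentIn_subset _ x)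
    (mem_connectedComponentIn hx) hy

end ConnectedComponentIn

section Sublevel

variable {X α : Type*} [TopologicalSpace X] [LocallyConnectedSpace X] [LinearOrder α]

theorem connectedComponentIn_setOf_lt_eq_biUnion_of_isLUB {f : X → α}
    (hf : UpperSemicontinuous f) {s : Set α} {μ : α} (hs : IsLUB s μ) (x : X) :
    connectedComponentIn {y | f y < μ} x = ⋃ l ∈ s, connectedComponentIn {y | f y < l} x := by
  have sublevel_eq : {y | f y < μ} = ⋃ l : s, {y | f y < l} := by
    change f ⁻¹' Iio μ = ⋃ l : s, f ⁻¹' Iio (l : α)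
    rw [← hs.biUnion_Iio_eq, preimage_iUnion₂, biUnion_eq_iUnion]
  have sublevel_mono : Monotone fun l : s => {y | f y < l} :=
    fun _ _ hlm _ hy => lt_of_lt_of_le hy hlm
  rw [sublevel_eq, biUnion_eq_iUnion]
  exact connectedComponentIn_iUnion_of_directed (fun l : s => hf.isOpen_preimage l)
    sublevel_mono.directed_le x

theorem stmt0_general [DenselyOrdered α] {f : X → α} (hf : UpperSemicontinuous f) {x : X} {μ : α}
    (hμ : f x < μ) :
    connectedComponentIn {y | f y < μ} x =
      ⋃ l ∈ Ioo (f x) μ, connectedComponentIn {y | f y < l} x :=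
  connectedComponentIn_setOf_lt_eq_biUnion_of_isLUB hf (isLUB_Ioo hμ) x

end Sublevel

/-- Lemma 2.2, equation (2.5): in a locally connected space, the connected component of `x`
in the open sublevel set `{f < μ}` is the union over `λ ∈ (f x, μ)` of the connected
components of `x` in `{f < λ}`. -/
theorem stmt0 {X : Type*} [TopologicalSpace X] [LocallyConnectedSpace X]
    (f : X → ℝ) (hf : Continuous f) (x : X) (μ : ℝ) (hμ : f x < μ) :
    connectedComponentIn {y | f y < μ} x =
      ⋃ l ∈ Set.Ioo (f x) μ, connectedComponentIn {y | f y < l} x :=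
  stmt0_general hf.upperSemicontinuous hμ
end

section
/- Let X be a compact Hausdorff topological space and f : X → ℝ a continuous function. Then for every x ∈ X and every real μ > f(x), the connected component of x in the closed sublevel set {f ≤ μ} is equal to the intersection, over all real λ > μ, of the connected components of x in {f ≤ λ}. (Lemma 2.2, equation (2.6), of the paper; the proof uses that a decreasing intersection of compact connected sets in a Hausdorff space is connected.) -/
/-!
A directed intersection of closed connected sets, one of them compact, is connected: if it is
covered by two disjoint closed sets, these are separated within the compact member by disjoint open
sets, which by compactness already cover some member of the family. That member is connected, so it
lies in one of the two open sets, and hence so does the intersection.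

Applied to the components of `x` in a directed family of closed sets `F i`, this shows that
`⋂ i, connectedComponentIn (F i) x` is a connected subset of `⋂ i, F i`. Sublevel sets are such a
family, and `{f ≤ μ} = ⋂ l > μ, {f ≤ l}` because the values are densely ordered.
-/

open Set

section Topology

variable {X ι : Type*} [TopologicalSpace X] {F : ι → Set X} {i₀ : ι}

theorem exists_subset_of_iInter_subset_of_isOpen (hdir : Directed (· ⊇ ·) F)
    (hclosed : ∀ i, IsClosed (F i)) (hcompact : IsCompact (F i₀)) {U : Set X} (hU : IsOpen U)
    (hFU : ⋂ i, F i ⊆ U) : ∃ i, F i ⊆ U := by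
  have : Nonempty ι := ⟨i₀⟩
  have hempty : F i₀ \ U ∩ ⋂ i, F i = ∅ :=
    eq_empty_of_forall_notMem fun _ hy => hy.1.2 (hFU hy.2)
  obtain ⟨i, hi⟩ := (hcompact.diff hU).elim_directed_family_closed F hclosed hempty hdir
  obtain ⟨k, hk₀, hki⟩ := hdir i₀ i
  exact ⟨k, fun y hy => by_contra fun hyU => eq_empty_iff_forall_notMem.1 hi y
    ⟨⟨hk₀ hy, hyU⟩, hki hy⟩⟩

theorem isPreconnected_iInter_of_directed [R1Space X] (hdir : Directed (· ⊇ ·) F)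
    (hclosed : ∀ i, IsClosed (F i)) (hcompact : IsCompact (F i₀))
    (hconn : ∀ i, IsPreconnected (F i)) : IsPreconnected (⋂ i, F i) := by
  rw [isPreconnected_iff_subset_of_fully_disjoint_closed (isClosed_iInter hclosed)]
  intro u v hu hv hcover hdisj
  obtain ⟨U, V, hU, hV, huU, hvV, hUV⟩ : SeparatedNhds (F i₀ ∩ u) (F i₀ ∩ v) :=
    .of_isCompact_isCompact_isClosed (hcompact.inter_right hu) (hcompact.inter_right hv)
      ((hclosed i₀).inter hv) (hdisj.mono inter_subset_right inter_subset_right)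
  have hFUV : ⋂ i, F i ⊆ U ∪ V := fun y hy =>
    (hcover hy).imp (fun hyu => huU ⟨mem_iInter.1 hy i₀, hyu⟩)
      (fun hyv => hvV ⟨mem_iInter.1 hy i₀, hyv⟩)
  obtain ⟨i, hi⟩ :=
    exists_subset_of_iInter_subset_of_isOpen hdir hclosed hcompact (hU.union hV) hFUV
  refine ((hconn i).subset_or_subset hU hV hUV hi).imp (fun hiU y hy => ?_) (fun hiV y hy => ?_)
  · exact (hcover hy).resolve_right fun hyv =>
      hUV.notMem_of_mem_left (hiU (mem_iInter.1 hy i)) (hvV ⟨mem_iInter.1 hy i₀, hyv⟩)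
  · exact (hcover hy).resolve_left fun hyu =>
      hUV.notMem_of_mem_left (huU ⟨mem_iInter.1 hy i₀, hyu⟩) (hiV (mem_iInter.1 hy i))

theorem isClosed_connectedComponentIn {S : Set X} (hS : IsClosed S) (x : X) :
    IsClosed (connectedComponentIn S x) := by
  refine isClosed_of_closure_subset fun y hy => ?_
  have hx : x ∈ S := connectedComponentIn_nonempty_iff.1 (closure_nonempty_iff.1 ⟨y, hy⟩)
  exact isPreconnected_connectedComponentIn.closure.subset_connectedComponentIn
    (subset_closure (mem_connectedComponentIn hx))
    (closure_minimal (connectedComponentIn_subset S x) hS) hy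

theorem connectedComponentIn_iInter_of_directed [R1Space X] (hdir : Directed (· ⊇ ·) F)
    (hclosed : ∀ i, IsClosed (F i)) (hcompact : IsCompact (F i₀)) (x : X) :
    connectedComponentIn (⋂ i, F i) x = ⋂ i, connectedComponentIn (F i) x := by
  refine Subset.antisymm
    (subset_iInter fun i => connectedComponentIn_mono x (iInter_subset F i)) fun y hy => ?_
  have hx (i : ι) : x ∈ F i := connectedComponentIn_nonempty_iff.1 ⟨y, mem_iInter.1 hy i⟩
  have hdir' : Directed (· ⊇ ·) fun i => connectedComponentIn (F i) x :=
    fun i j => (hdir i j).imp fun _ =>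
      And.imp (connectedComponentIn_mono x) (connectedComponentIn_mono x)
  have hclosed' (i : ι) : IsClosed (connectedComponentIn (F i) x) :=
    isClosed_connectedComponentIn (hclosed i) x
  have hconn : IsPreconnected (⋂ i, connectedComponentIn (F i) x) :=
    isPreconnected_iInter_of_directed hdir' hclosed'
      (hcompact.of_isClosed_subset (hclosed' i₀) (connectedComponentIn_subset _ x))
      fun _ => isPreconnected_connectedComponentIn
  exact hconn.subset_connectedComponentIn
    (mem_iInter.2 fun i => mem_connectedComponentIn (hx i))
    (iInter_mono fun i => connectedComponentIn_subset (F i) x) hy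

end Topology

theorem setOf_le_eq_iInter_Ioi {X R : Type*} [LinearOrder R] [DenselyOrdered R] (f : X → R)
    (μ : R) : {y | f y ≤ μ} = ⋂ l : Ioi μ, {y | f y ≤ l} := by
  ext y
  simp only [mem_ofPred_eq, mem_iInter, Subtype.forall, mem_Ioi, forall_gt_imp_ge_iff_le_of_dense]

theorem stmt1_general {X R : Type*} [TopologicalSpace X] [R1Space X] [LinearOrder R]
    [DenselyOrdered R] {f : X → R} (hf : LowerSemicontinuous f) {μ c : R} (hμc : μ < c)
    (hc : IsCompact {y | f y ≤ c}) (x : X) :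
    connectedComponentIn {y | f y ≤ μ} x =
      ⋂ l ∈ Ioi μ, connectedComponentIn {y | f y ≤ l} x := by
  rw [biInter_eq_iInter, setOf_le_eq_iInter_Ioi]
  have hmono : Monotone fun l : Ioi μ => {y | f y ≤ l} := fun _ _ hkl _ hy => le_trans hy hkl
  exact connectedComponentIn_iInter_of_directed (i₀ := ⟨c, hμc⟩) hmono.directed_ge
    (fun l => hf.isClosed_preimage l) hc x

/-- Lemma 2.2, equation (2.6): in a compact Hausdorff space, the connected component of `x`
in the closed sublevel set `{f ≤ μ}` is the intersection over `λ > μ` of the connected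
components of `x` in `{f ≤ λ}`. -/
theorem stmt1 {X : Type*} [TopologicalSpace X] [CompactSpace X] [T2Space X]
    (f : X → ℝ) (hf : Continuous f) (x : X) (μ : ℝ) (hμ : f x < μ) :
    connectedComponentIn {y | f y ≤ μ} x =
      ⋂ l ∈ Set.Ioi μ, connectedComponentIn {y | f y ≤ l} x :=
  stmt1_general hf.lowerSemicontinuous (lt_add_one μ)
    (isClosed_le hf continuous_const).isCompact x
end

section
/- Let X be a locally path-connected topological space, A ⊆ X a nonempty subset, f : X → ℝ continuous, and x ∈ X. Assume that the set Λ(x) = {λ ∈ ℝ : λ > f(x) and the connected component of x in {f < λ} is disjoint from A} is nonempty, and that there exists at least one continuous path from x to A. Then Λ(x) is bounded above and sup Λ(x) equals the infimum, over all continuous paths γ : [0,1] → X with γ(0) = x and γ(1) ∈ A, of max_{t∈[0,1]} f(γ(t)). (Lemma 2.3 of the paper: the path height H_f(x) of equation (1.7) coincides with the quantity λ(x) of equation (2.3).) -/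
/-!
A level `l > f x` is confined (the component of `x` in `{f < l}` misses `A`) exactly when it is a
lower bound of the maxima of `f` along the paths from `x` to `A`: components of the open set
`{f < l}` are path components, and a path stays in `{f < l}` if and only if its maximum, being
attained, is `< l`. The path height is the greatest such lower bound, so once some level is confined
and some path reaches `A`, the path height is itself the largest confined level.
-/

section

open Set

variable {X α : Type*} [TopologicalSpace X]

/-- The set `Λ(x)` of levels `l > f x` at which the open well of `f` around `x`, that is, the
connected component of `x` in `{f < l}`, does not reach `A`. -/
def confinedLevels [LT α] (f : X → α) (A : Set X) (x : X) : Set α :=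
  {l | f x < l ∧ connectedComponentIn {y | f y < l} x ∩ A = ∅}

/-- The set of maxima of `f` along the continuous paths from `x` to `A`. The maximum is encoded as
the supremum of `f ∘ γ`, which is a junk value unless `f ∘ γ` is bounded above. -/
def pathMaxima [SupSet α] (f : X → α) (A : Set X) (x : X) : Set α :=
  {m | ∃ γ : unitInterval → X, Continuous γ ∧ γ 0 = x ∧ γ 1 ∈ A ∧ m = sSup (range (f ∘ γ))}

/-- The path height `H_f(x)`: the infimum, over all paths from `x` to `A`, of the maximum of `f`
along the path. It is a junk value when no such path exists. -/
def pathHeight [SupSet α] [InfSet α] (f : X → α) (A : Set X) (x : X) : α :=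
  sInf (pathMaxima f A x)

theorem pathComponentIn_eq_connectedComponentIn [LocallyPathConnectedSpace X] {U : Set X}
    (hU : IsOpen U) (x : X) : pathComponentIn U x = connectedComponentIn U x := by
  by_cases hx : x ∈ U
  · refine Subset.antisymm ?_ ?_
    · exact (isPathConnected_pathComponentIn hx).isConnected.isPreconnected
        |>.subset_connectedComponentIn (mem_pathComponentIn_self hx) pathComponentIn_subset
    · have hpath : IsPathConnected (connectedComponentIn U x) :=
        hU.connectedComponentIn.isConnected_iff_isPathConnected.mp
          (isConnected_connectedComponentIn_iff.mpr hx)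
      exact hpath.subset_pathComponentIn (mem_connectedComponentIn hx)
        (connectedComponentIn_subset U x)
  · rw [connectedComponentIn_eq_empty hx, ← not_nonempty_iff_eq_empty,
      pathComponentIn_nonempty_iff]
    exact hx

variable [ConditionallyCompleteLinearOrder α] {f : X → α} {A : Set X} {x : X}

theorem sSup_range_lt_iff_of_upperSemicontinuous [CompactSpace X] [Nonempty X]
    (hf : UpperSemicontinuous f) {l : α} : sSup (range f) < l ↔ ∀ y, f y < l := by
  obtain ⟨z, -, hz⟩ :=
    (hf.upperSemicontinuousOn univ).exists_isMaxOn univ_nonempty isCompact_univ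
  have hmax : IsGreatest (range f) (f z) :=
    ⟨mem_range_self z, forall_mem_range.mpr fun y ↦ hz (mem_univ y)⟩
  rw [hmax.csSup_eq, hmax.lt_iff, forall_mem_range]

theorem exists_mem_pathMaxima_lt_iff (hf : UpperSemicontinuous f) {l : α} :
    (∃ m ∈ pathMaxima f A x, m < l) ↔ (pathComponentIn {y | f y < l} x ∩ A).Nonempty := by
  constructor
  · rintro ⟨_, ⟨γ, hγ, rfl, hA, rfl⟩, hlt⟩
    have hbelow : ∀ t, f (γ t) < l :=
      (sSup_range_lt_iff_of_upperSemicontinuous (hf.comp hγ)).mp hlt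
    exact ⟨γ 1, ⟨⟨⟨γ, hγ⟩, rfl, rfl⟩, hbelow⟩, hA⟩
  · rintro ⟨a, ⟨γ, hbelow⟩, ha⟩
    exact ⟨_, ⟨γ, γ.continuous, γ.source, γ.target.symm ▸ ha, rfl⟩,
      (sSup_range_lt_iff_of_upperSemicontinuous (hf.comp γ.continuous)).mpr hbelow⟩

theorem confinedLevels_eq_Ioi_inter_lowerBounds [LocallyPathConnectedSpace X]
    (hf : UpperSemicontinuous f) :
    confinedLevels f A x = Ioi (f x) ∩ lowerBounds (pathMaxima f A x) := by
  ext l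
  have hU : IsOpen {y | f y < l} := hf.isOpen_preimage l
  have hiff : connectedComponentIn {y | f y < l} x ∩ A = ∅ ↔
      l ∈ lowerBounds (pathMaxima f A x) := by
    rw [← pathComponentIn_eq_connectedComponentIn hU, ← not_nonempty_iff_eq_empty,
      ← exists_mem_pathMaxima_lt_iff hf]
    push Not
    rfl
  exact and_congr_right' hiff

theorem stmt3_general [LocallyPathConnectedSpace X] (hf : UpperSemicontinuous f)
    (hΛ : (confinedLevels f A x).Nonempty)
    (hpath : ∃ γ : unitInterval → X, Continuous γ ∧ γ 0 = x ∧ γ 1 ∈ A) :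
    IsGreatest (confinedLevels f A x) (pathHeight f A x) := by
  rw [confinedLevels_eq_Ioi_inter_lowerBounds hf] at hΛ ⊢
  obtain ⟨l, hxl, hl⟩ := hΛ
  obtain ⟨γ, hγ, h0, h1⟩ := hpath
  have hglb : IsGLB (pathMaxima f A x) (pathHeight f A x) :=
    isGLB_csInf ⟨_, γ, hγ, h0, h1, rfl⟩ ⟨l, hl⟩
  exact ⟨⟨hxl.trans_le (hglb.2 hl), hglb.1⟩, fun _ h ↦ hglb.2 h.2⟩

end

/-- Lemma 2.3 of the paper: in a locally path-connected space, the supremum `λ(x)` of the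
levels `λ > f(x)` whose open well around `x` avoids `A` equals the path height
`H_f(x) = inf over paths γ from x to A of max f∘γ`. -/
theorem stmt3 {X : Type*} [TopologicalSpace X] [LocallyPathConnectedSpace X]
    (A : Set X) (hA : A.Nonempty) (f : X → ℝ) (hf : Continuous f) (x : X)
    (hΛ : {l : ℝ | f x < l ∧ connectedComponentIn {y | f y < l} x ∩ A = ∅}.Nonempty)
    (hpath : ∃ γ : unitInterval → X, Continuous γ ∧ γ 0 = x ∧ γ 1 ∈ A) :
    BddAbove {l : ℝ | f x < l ∧ connectedComponentIn {y | f y < l} x ∩ A = ∅} ∧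
    sSup {l : ℝ | f x < l ∧ connectedComponentIn {y | f y < l} x ∩ A = ∅} =
      sInf {m : ℝ | ∃ γ : unitInterval → X, Continuous γ ∧ γ 0 = x ∧ γ 1 ∈ A ∧
        m = sSup (Set.range (f ∘ γ))} := by
  have hmax := stmt3_general hf.upperSemicontinuous hΛ hpath
  exact ⟨hmax.bddAbove, hmax.csSup_eq⟩
end

section
/- Let X be a compact Hausdorff locally connected topological space, f : X → ℝ continuous, λ ∈ ℝ, and let x ≠ y be two points lying in a common connected component of {f < λ}, such that the set S = {μ > f(y) : x does not belong to the connected component of y in {f < μ}} is nonempty; put λ_x(y) = sup S. Then x belongs to the connected component of y in the closed sublevel set {f ≤ λ_x(y)}. Moreover, if f(x) < λ_x(y), then x does not belong to the closure of the connected component of y in {f < λ_x(y)}, so that this closure is strictly contained in the connected component of y in {f ≤ λ_x(y)} (in particular the closure of the open well of y at level λ_x(y) is not a connected component of {f ≤ λ_x(y)}). (Step 1 of the proof of Proposition 2.7 of the paper, around equations (2.25)–(2.26).) -/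
/-! Every closed well is the intersection of the closed wells at slightly higher levels, because a
directed intersection of closed compact connected sets is connected. Since `x` lies in the open
well of `y` at each level just above `λ_x(y)`, it lies in the closed well at `λ_x(y)`.
Dually, every open well is the union of the open wells at lower levels, because the components of
open sets are open. Hence `x`, lying in none of those below `λ_x(y)`, is not in the open well at
`λ_x(y)`. That well is relatively closed in `{f < λ_x(y)}`, so its closure does not contain `x`
either when `f x < λ_x(y)`. -/

open Set

section Component

variable {X : Type*} [TopologicalSpace X] {F : Set X} {x y : X}

theorem isClosed_connectedComponentIn_s8 (hF : IsClosed F) : IsClosed (connectedComponentIn F x) := by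
  by_cases hx : x ∈ F
  · refine isClosed_of_closure_subset ?_
    exact isPreconnected_connectedComponentIn.closure.subset_connectedComponentIn
      (subset_closure (mem_connectedComponentIn hx))
      (closure_minimal (connectedComponentIn_subset F x) hF)
  · rw [connectedComponentIn_eq_empty hx]
    exact isClosed_empty

theorem mem_connectedComponentIn_of_inter_nonempty (hx : x ∈ F)
    (h : (connectedComponentIn F x ∩ connectedComponentIn F y).Nonempty) :
    x ∈ connectedComponentIn F y := by
  obtain ⟨z, hzx, hzy⟩ := h
  rw [connectedComponentIn_eq hzy, ← connectedComponentIn_eq hzx]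
  exact mem_connectedComponentIn hx

theorem closure_connectedComponentIn_inter_subset [LocallyConnectedSpace X] (hF : IsOpen F) :
    closure (connectedComponentIn F y) ∩ F ⊆ connectedComponentIn F y := fun _ ⟨hz, hzF⟩ ↦
  mem_connectedComponentIn_of_inter_nonempty hzF <|
    mem_closure_iff_nhds.1 hz _ (connectedComponentIn_mem_nhds (hF.mem_nhds hzF))

variable {ι : Type*} {s : ι → Set X}

theorem isPreconnected_iInter_of_directed_s8 [R1Space X] [Nonempty ι] (hd : Directed (· ⊇ ·) s)
    (hcpt : ∀ i, IsCompact (s i)) (hcl : ∀ i, IsClosed (s i)) (hs : ∀ i, IsPreconnected (s i)) :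
    IsPreconnected (⋂ i, s i) := by
  have hK : IsClosed (⋂ i, s i) := isClosed_iInter hcl
  have hKcpt : IsCompact (⋂ i, s i) :=
    (hcpt (Classical.arbitrary ι)).of_isClosed_subset hK (iInter_subset _ _)
  rw [isPreconnected_iff_subset_of_fully_disjoint_closed hK]
  intro a b ha hb hab hdisj
  obtain ⟨U, V, hU, hV, haU, hbV, hUV⟩ : SeparatedNhds ((⋂ i, s i) ∩ a) ((⋂ i, s i) ∩ b) :=
    .of_isCompact_isCompact_isClosed (hKcpt.inter_right ha) (hKcpt.inter_right hb)
      (hK.inter hb) (hdisj.mono inter_subset_right inter_subset_right)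
  have hKUV : ⋂ i, s i ⊆ U ∪ V := fun z hz ↦
    (hab hz).imp (fun hza ↦ haU ⟨hz, hza⟩) (fun hzb ↦ hbV ⟨hz, hzb⟩)
  obtain ⟨i, hi⟩ : ∃ i, s i ⊆ U ∪ V :=
    exists_subset_nhds_of_isCompact' hd hcpt hcl fun z hz ↦ (hU.union hV).mem_nhds (hKUV hz)
  refine ((hs i).subset_or_subset hU hV hUV hi).imp (fun h z hz ↦ ?_) (fun h z hz ↦ ?_)
  · exact (hab hz).resolve_right fun hzb ↦
      disjoint_left.1 hUV (h (mem_iInter.1 hz i)) (hbV ⟨hz, hzb⟩)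
  · exact (hab hz).resolve_left fun hza ↦
      disjoint_left.1 hUV (haU ⟨hz, hza⟩) (h (mem_iInter.1 hz i))

theorem connectedComponentIn_iInter_of_directed_s8 [R1Space X] [Nonempty ι]
    (hd : Directed (· ⊇ ·) s) (hcpt : ∀ i, IsCompact (s i)) (hcl : ∀ i, IsClosed (s i)) (y : X) :
    connectedComponentIn (⋂ i, s i) y = ⋂ i, connectedComponentIn (s i) y := by
  refine Subset.antisymm
    (subset_iInter fun i ↦ connectedComponentIn_mono y (iInter_subset s i)) fun z hz ↦ ?_
  have hy (i : ι) : y ∈ s i := connectedComponentIn_nonempty_iff.1 ⟨z, mem_iInter.1 hz i⟩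
  have hpre : IsPreconnected (⋂ i, connectedComponentIn (s i) y) :=
    isPreconnected_iInter_of_directed_s8 (hd.mono_comp (g := (connectedComponentIn · y)) _
        fun _ _ h ↦ connectedComponentIn_mono y h)
      (fun i ↦ (hcpt i).of_isClosed_subset (isClosed_connectedComponentIn_s8 (hcl i))
        (connectedComponentIn_subset _ _))
      (fun i ↦ isClosed_connectedComponentIn_s8 (hcl i)) fun _ ↦ isPreconnected_connectedComponentIn
  exact hpre.subset_connectedComponentIn
    (mem_iInter.2 fun i ↦ mem_connectedComponentIn (hy i))
    (iInter_mono fun i ↦ connectedComponentIn_subset (s i) y) hz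

theorem connectedComponentIn_iUnion_of_directed_s8 [LocallyConnectedSpace X]
    (hd : Directed (· ⊆ ·) s) (ho : ∀ i, IsOpen (s i)) (y : X) :
    connectedComponentIn (⋃ i, s i) y = ⋃ i, connectedComponentIn (s i) y := by
  refine Subset.antisymm (fun w hw ↦ ?_)
    (iUnion_subset fun i ↦ connectedComponentIn_mono y (subset_iUnion s i))
  obtain ⟨i₀, hi₀⟩ := mem_iUnion.1 (connectedComponentIn_nonempty_iff.1 ⟨w, hw⟩)
  have hclosed : closure (⋃ i, connectedComponentIn (s i) y) ∩ connectedComponentIn (⋃ i, s i) y ⊆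
      ⋃ i, connectedComponentIn (s i) y := by
    rintro z ⟨hz, hzC⟩
    obtain ⟨i, hi⟩ := mem_iUnion.1 (connectedComponentIn_subset _ _ hzC)
    obtain ⟨u, huz, huy⟩ :=
      mem_closure_iff_nhds.1 hz _ (connectedComponentIn_mem_nhds ((ho i).mem_nhds hi))
    obtain ⟨j, hj⟩ := mem_iUnion.1 huy
    obtain ⟨k, hik, hjk⟩ := hd i j
    exact mem_iUnion.2 ⟨k, mem_connectedComponentIn_of_inter_nonempty (hik hi)
      ⟨u, connectedComponentIn_mono z hik huz, connectedComponentIn_mono y hjk hj⟩⟩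
  have hy : y ∈ ⋃ i, connectedComponentIn (s i) y :=
    mem_iUnion.2 ⟨i₀, mem_connectedComponentIn hi₀⟩
  exact isPreconnected_connectedComponentIn.subset_of_closure_inter_subset
    (isOpen_iUnion fun i ↦ (ho i).connectedComponentIn)
    ⟨y, mem_connectedComponentIn (mem_iUnion_of_mem i₀ hi₀), hy⟩ hclosed hw

end Component

section Well

variable {X α : Type*} [TopologicalSpace X]

section Preorder

variable [Preorder α] {f : X → α} {a b : α} {y : X}

/-- The open well of `y` at level `a`: the connected component of `y` in `{f < a}`, which is empty
unless `f y < a`. -/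
def openWell (f : X → α) (a : α) (y : X) : Set X :=
  connectedComponentIn {z | f z < a} y

/-- The closed well of `y` at level `a`: the connected component of `y` in `{f ≤ a}`, which is
empty unless `f y ≤ a`. -/
def closedWell (f : X → α) (a : α) (y : X) : Set X :=
  connectedComponentIn {z | f z ≤ a} y

/-- The levels above `f y` at which the open well of `y` does not contain `x`. -/
def separatingLevels (f : X → α) (x y : X) : Set α :=
  {a | f y < a ∧ x ∉ openWell f a y}

theorem openWell_mono (h : a ≤ b) : openWell f a y ⊆ openWell f b y :=
  connectedComponentIn_mono y fun _ hz ↦ lt_of_lt_of_le hz h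

theorem openWell_subset_closedWell : openWell f a y ⊆ closedWell f a y :=
  connectedComponentIn_mono y fun _ hz ↦ le_of_lt hz

theorem closure_openWell_subset_closedWell [TopologicalSpace α] [OrderClosedTopology α]
    (hf : Continuous f) :
    closure (openWell f a y) ⊆ closedWell f a y :=
  closure_minimal openWell_subset_closedWell
    (isClosed_connectedComponentIn_s8 (isClosed_le hf continuous_const))

end Preorder

section LinearOrder

variable [LinearOrder α] {f : X → α} {a c l : α} {x y : X}

theorem mem_upperBounds_separatingLevels (hx : x ∈ openWell f l y) :
    l ∈ upperBounds (separatingLevels f x y) := fun _ ha ↦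
  le_of_not_gt fun hla ↦ ha.2 (openWell_mono hla.le hx)

variable [TopologicalSpace α] [OrderClosedTopology α]

theorem closedWell_eq_iInter [DenselyOrdered α] [R1Space X] (hf : Continuous f) (hac : a < c)
    (hcpt : ∀ b ∈ Ioo a c, IsCompact {z | f z ≤ b}) (y : X) :
    closedWell f a y = ⋂ b : Ioo a c, closedWell f b y := by
  have hsub : {z | f z ≤ a} = ⋂ b : Ioo a c, {z | f z ≤ b} := by
    ext z
    simp only [mem_ofPred_eq, mem_iInter, Subtype.forall]
    refine ⟨fun hz b hb ↦ hz.trans hb.1.le, fun hz ↦ le_of_not_gt fun haz ↦ ?_⟩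
    obtain ⟨b, hab, hb⟩ := exists_between (lt_min haz hac)
    exact (hz b ⟨hab, hb.trans_le (min_le_right _ _)⟩).not_gt (hb.trans_le (min_le_left _ _))
  have : Nonempty (Ioo a c) := (nonempty_Ioo.2 hac).to_subtype
  have hd : Directed (· ⊇ ·) fun b : Ioo a c ↦ {z | f z ≤ b} :=
    directed_of_isDirected_ge fun _ _ h _ hz ↦ le_trans hz h
  rw [closedWell, hsub]
  exact connectedComponentIn_iInter_of_directed_s8 hd (fun b ↦ hcpt b b.2)
    (fun _ ↦ isClosed_le hf continuous_const) y

theorem openWell_eq_iUnion [DenselyOrdered α] [LocallyConnectedSpace X] (hf : Continuous f)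
    (a : α) (y : X) : openWell f a y = ⋃ b : Iio a, openWell f b y := by
  have hsub : {z | f z < a} = ⋃ b : Iio a, {z | f z < b} := by
    ext z
    simp only [mem_ofPred_eq, mem_iUnion, Subtype.exists, mem_Iio, exists_prop]
    exact ⟨fun hz ↦ (exists_between hz).imp fun _ h ↦ h.symm, fun ⟨_, hba, hzb⟩ ↦ hzb.trans hba⟩
  have hd : Directed (· ⊆ ·) fun b : Iio a ↦ {z | f z < b} :=
    directed_of_isDirected_le fun _ _ h _ hz ↦ lt_of_lt_of_le hz h
  rw [openWell, hsub]
  exact connectedComponentIn_iUnion_of_directed_s8 hd (fun _ ↦ isOpen_lt hf continuous_const) y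

end LinearOrder

end Well

section SeparatingLevel

variable {X α : Type*} [TopologicalSpace X] [ConditionallyCompleteLinearOrder α]
  {f : X → α} {a l : α} {x y : X}

/-- The level `λ_x(y)`, the supremum of `separatingLevels f x y`. It is meaningful only when this
set is nonempty and bounded above. -/
noncomputable def separatingLevel (f : X → α) (x y : X) : α :=
  sSup (separatingLevels f x y)

theorem separatingLevel_le (hx : x ∈ openWell f l y) (hne : (separatingLevels f x y).Nonempty) :
    separatingLevel f x y ≤ l :=
  csSup_le hne (mem_upperBounds_separatingLevels hx)

theorem lt_separatingLevel (hx : x ∈ openWell f l y) (hne : (separatingLevels f x y).Nonempty) :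
    f y < separatingLevel f x y := by
  obtain ⟨a, ha⟩ := hne
  exact ha.1.trans_le (le_csSup ⟨l, mem_upperBounds_separatingLevels hx⟩ ha)

theorem mem_openWell_of_separatingLevel_lt (hx : x ∈ openWell f l y)
    (hne : (separatingLevels f x y).Nonempty) (ha : separatingLevel f x y < a) :
    x ∈ openWell f a y := by
  by_contra hxa
  have hmem : a ∈ separatingLevels f x y := ⟨(lt_separatingLevel hx hne).trans ha, hxa⟩
  exact ha.not_ge (le_csSup ⟨l, mem_upperBounds_separatingLevels hx⟩ hmem)

theorem notMem_openWell_of_lt_separatingLevel (hne : (separatingLevels f x y).Nonempty)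
    (ha : a < separatingLevel f x y) : x ∉ openWell f a y := by
  obtain ⟨b, hb, hab⟩ := exists_lt_of_lt_csSup hne ha
  exact fun hxa ↦ hb.2 (openWell_mono hab.le hxa)

variable [DenselyOrdered α] [TopologicalSpace α] [OrderClosedTopology α]

theorem mem_closedWell_separatingLevel [R1Space X] (hf : Continuous f)
    (hcpt : ∀ b < l, IsCompact {z | f z ≤ b}) (hx : x ∈ openWell f l y)
    (hne : (separatingLevels f x y).Nonempty) : x ∈ closedWell f (separatingLevel f x y) y := by
  rcases (separatingLevel_le hx hne).eq_or_lt with heq | hlt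
  · rw [heq]
    exact openWell_subset_closedWell hx
  · rw [closedWell_eq_iInter hf hlt fun b hb ↦ hcpt b hb.2]
    exact mem_iInter.2 fun b ↦
      openWell_subset_closedWell (mem_openWell_of_separatingLevel_lt hx hne b.2.1)

theorem notMem_openWell_separatingLevel [LocallyConnectedSpace X] (hf : Continuous f)
    (hne : (separatingLevels f x y).Nonempty) : x ∉ openWell f (separatingLevel f x y) y := by
  rw [openWell_eq_iUnion hf, mem_iUnion]
  exact fun ⟨b, hxb⟩ ↦ notMem_openWell_of_lt_separatingLevel hne b.2 hxb

theorem notMem_closure_openWell_separatingLevel [LocallyConnectedSpace X] (hf : Continuous f)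
    (hne : (separatingLevels f x y).Nonempty) (hfx : f x < separatingLevel f x y) :
    x ∉ closure (openWell f (separatingLevel f x y) y) := fun hcl ↦
  notMem_openWell_separatingLevel hf hne <|
    closure_connectedComponentIn_inter_subset (isOpen_lt hf continuous_const) ⟨hcl, hfx⟩

theorem stmt8_general [R1Space X] [LocallyConnectedSpace X] (hf : Continuous f)
    (hcpt : ∀ b < l, IsCompact {z | f z ≤ b}) (hx : x ∈ openWell f l y)
    (hne : (separatingLevels f x y).Nonempty) :
    x ∈ closedWell f (separatingLevel f x y) y ∧
    (f x < separatingLevel f x y →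
      x ∉ closure (openWell f (separatingLevel f x y) y) ∧
      closure (openWell f (separatingLevel f x y) y) ⊂
        closedWell f (separatingLevel f x y) y) := by
  have hmem : x ∈ closedWell f (separatingLevel f x y) y :=
    mem_closedWell_separatingLevel hf hcpt hx hne
  refine ⟨hmem, fun hfx ↦ ?_⟩
  have hnot := notMem_closure_openWell_separatingLevel hf hne hfx
  exact ⟨hnot, closure_openWell_subset_closedWell hf, fun hsub ↦ hnot (hsub hmem)⟩

end SeparatingLevel

/-- Step 1 of the proof of Proposition 2.7 (around (2.25)–(2.26)): `x` belongs to the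
closed well of `y` at the separating level `λ_x(y) = sup S`; if moreover `f(x) < λ_x(y)`,
then `x` is not in the closure of the open well of `y` at that level, so this closure is
strictly contained in the closed well. -/
theorem stmt8 {X : Type*} [TopologicalSpace X] [CompactSpace X] [T2Space X]
    [LocallyConnectedSpace X]
    (f : X → ℝ) (hf : Continuous f) (l : ℝ) (x y : X) (hxy : x ≠ y)
    (hx : x ∈ connectedComponentIn {z | f z < l} y)
    (S : Set ℝ)
    (hS : S = {μ : ℝ | f y < μ ∧ x ∉ connectedComponentIn {z | f z < μ} y})
    (hSne : S.Nonempty) :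
    x ∈ connectedComponentIn {z | f z ≤ sSup S} y ∧
    (f x < sSup S →
      x ∉ closure (connectedComponentIn {z | f z < sSup S} y) ∧
      closure (connectedComponentIn {z | f z < sSup S} y) ⊂
        connectedComponentIn {z | f z ≤ sSup S} y) := by
  subst hS
  exact stmt8_general hf (fun _ _ ↦ (isClosed_le hf continuous_const).isCompact) hx hSne
end

section
/- Let X be a Hausdorff topological space, A ⊆ X a subset, and f : X → ℝ continuous. Let x ∈ X and suppose there is a compact set K ⊆ X with x in the interior of K, K ∩ A = ∅, and f(z) > f(x) for all z ∈ K \ {x} (i.e. x is a strict local minimum of f with a compact neighbourhood avoiding A). Then there exists λ > f(x) such that the connected component of x in {f < λ} is contained in K; in particular the set Λ(x) = {λ > f(x) : the connected component of x in {f < λ} is disjoint from A} is nonempty, so λ(x) = sup Λ(x) is well defined. (This is the claim, made after equation (2.3) of the paper, that under assumption (A0) the quantity λ(x) is well defined for every (nondegenerate, hence strict) local minimum x of f in Ω.) -/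
/-! On the compact set `frontier K`, unless it is empty, `f` attains a minimum, a level above
`f x`. The sublevel set at this level misses `frontier K`, and a connected set that meets `K` cannot
leave it without crossing `frontier K`. -/

section Frontier

variable {X : Type*} [TopologicalSpace X] {s t : Set X}

theorem subset_interior_of_isPreconnected_of_disjoint_frontier (hs : IsPreconnected s)
    (hst : (s ∩ t).Nonempty) (hd : Disjoint s (frontier t)) : s ⊆ interior t := by
  have mem_interior {y : X} (hys : y ∈ s) (hyt : y ∈ closure t) : y ∈ interior t :=
    by_contra fun hyi => hd.notMem_of_mem_left hys ⟨hyt, hyi⟩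
  obtain ⟨y, hys, hyt⟩ := hst
  exact hs.subset_of_closure_inter_subset isOpen_interior
    ⟨y, hys, mem_interior hys (subset_closure hyt)⟩
    fun z ⟨hzt, hzs⟩ => mem_interior hzs (closure_mono interior_subset hzt)

theorem connectedComponentIn_subset_interior_of_disjoint_frontier {x : X} (hx : x ∈ t)
    (hd : Disjoint s (frontier t)) : connectedComponentIn s x ⊆ interior t := by
  by_cases hxs : x ∈ s
  · exact subset_interior_of_isPreconnected_of_disjoint_frontier
      isPreconnected_connectedComponentIn ⟨x, mem_connectedComponentIn hxs, hx⟩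
      (hd.mono_left (connectedComponentIn_subset s x))
  · simp [connectedComponentIn_eq_empty hxs]

theorem isCompact_frontier_of_isCompact [T2Space X] (ht : IsCompact t) : IsCompact (frontier t) :=
  ht.of_isClosed_subset isClosed_frontier ht.isClosed.frontier_subset

theorem lt_of_mem_frontier_of_forall_ne_lt {α : Type*} [LT α] {f : X → α} {x : X}
    (ht : IsClosed t) (hx : x ∈ interior t) (hmin : ∀ z ∈ t, z ≠ x → f x < f z) :
    ∀ z ∈ frontier t, f x < f z :=
  fun z hz => hmin z (ht.frontier_subset hz) (ne_of_mem_of_not_mem hx hz.2).symm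

end Frontier

section Sublevel

variable {X α : Type*} [TopologicalSpace X] [LinearOrder α] [NoMaxOrder α] {f : X → α}

theorem exists_gt_forall_le_of_isCompact {s : Set X} (hs : IsCompact s)
    (hf : LowerSemicontinuousOn f s) {c : α} (hc : ∀ z ∈ s, c < f z) :
    ∃ l, c < l ∧ ∀ z ∈ s, l ≤ f z := by
  rcases s.eq_empty_or_nonempty with rfl | hne
  · obtain ⟨l, hl⟩ := exists_gt c
    exact ⟨l, hl, by simp⟩
  · obtain ⟨z, hz, hmin⟩ := hf.exists_isMinOn hne hs
    exact ⟨f z, hc z hz, isMinOn_iff.mp hmin⟩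

theorem exists_gt_connectedComponentIn_lt_subset_interior {K : Set X} {x : X}
    (hK : IsCompact (frontier K)) (hf : LowerSemicontinuousOn f (frontier K)) (hx : x ∈ K)
    (hlt : ∀ z ∈ frontier K, f x < f z) :
    ∃ l, f x < l ∧ connectedComponentIn {y | f y < l} x ⊆ interior K := by
  obtain ⟨l, hxl, hl⟩ := exists_gt_forall_le_of_isCompact hK hf hlt
  have hd : Disjoint {y | f y < l} (frontier K) :=
    Set.disjoint_left.mpr fun y hyl hyK => (hl y hyK).not_gt hyl
  exact ⟨l, hxl, connectedComponentIn_subset_interior_of_disjoint_frontier hx hd⟩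

end Sublevel

theorem stmt10_general {X α : Type*} [TopologicalSpace X] [LinearOrder α] [NoMaxOrder α]
    (A : Set X) (f : X → α) (x : X) (K : Set X) (hK : IsCompact (frontier K))
    (hf : LowerSemicontinuousOn f (frontier K)) (hxK : x ∈ K) (hKA : K ∩ A = ∅)
    (hlt : ∀ z ∈ frontier K, f x < f z) :
    (∃ l, f x < l ∧ connectedComponentIn {y | f y < l} x ⊆ K) ∧
    {l : α | f x < l ∧ connectedComponentIn {y | f y < l} x ∩ A = ∅}.Nonempty := by
  obtain ⟨l, hxl, hl⟩ := exists_gt_connectedComponentIn_lt_subset_interior hK hf hxK hlt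
  have hlK : connectedComponentIn {y | f y < l} x ⊆ K := hl.trans interior_subset
  have hlA : connectedComponentIn {y | f y < l} x ∩ A = ∅ :=
    Set.subset_eq_empty (Set.inter_subset_inter_left A hlK) hKA
  exact ⟨⟨l, hxl, hlK⟩, l, hxl, hlA⟩

/-- Around equation (2.3) of the paper: if `x` is a strict local minimum of `f` with a
compact neighbourhood `K` avoiding `A`, then for some `λ > f(x)` the open well of `x` at
level `λ` is contained in `K`; in particular the set `Λ(x)` is nonempty. -/
theorem stmt10 {X : Type*} [TopologicalSpace X] [T2Space X]
    (A : Set X) (f : X → ℝ) (hf : Continuous f) (x : X) (K : Set X)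
    (hK : IsCompact K) (hxK : x ∈ interior K) (hKA : K ∩ A = ∅)
    (hmin : ∀ z ∈ K, z ≠ x → f x < f z) :
    (∃ l, f x < l ∧ connectedComponentIn {y | f y < l} x ⊆ K) ∧
    {l : ℝ | f x < l ∧ connectedComponentIn {y | f y < l} x ∩ A = ∅}.Nonempty :=
  stmt10_general A f x K (isCompact_frontier_of_isCompact hK)
    hf.continuousOn.lowerSemicontinuousOn (interior_subset hxK) hKA
    (lt_of_mem_frontier_of_forall_ne_lt hK.isClosed hxK hmin)
end

section
/- Let d ≥ 1, let f : ℝ^d → ℝ be continuous, and let χ : ℝ^d → ℝ be a continuously differentiable function with compact support. Assume there exist x₀ ∈ ℝ^d and r > 0 with χ ≡ 1 on the closed ball of radius r around x₀, and a real number a > f(x₀) such that f ≥ a on the support of ∇χ. Then for every δ ∈ (0, a − f(x₀)) there exist C > 0 and h₀ > 0 such that for all h ∈ (0, h₀): (∫_{ℝ^d} h² |∇χ(x)|² e^{−2f(x)/h} dx)^{1/2} ≤ C e^{−(a − f(x₀) − δ)/h} (∫_{ℝ^d} χ(x)² e^{−2f(x)/h} dx)^{1/2}. (This is the analytic content of Lemma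 3.2 of the paper: with a = f(j(x_{k,ℓ})) − 2ε and x₀ = x_{k,ℓ} it yields the quasi-mode estimate ‖d_{f,h} ṽ_{k,ℓ}‖_{L²} = h‖e^{−f/h}∇χ‖_{L²}/‖e^{−f/h}χ‖_{L²} ≤ C e^{−(f(j(x_{k,ℓ}))−f(x_{k,ℓ})−cε)/h}.) -/
open MeasureTheory

/-!
The numerator only sees the region `f ≥ a`, so it is at most a constant times `exp (-2 * a / h)`.
The denominator is at least its contribution from the open set `{f < b}` with `b = f x₀ + δ`, which
is at least a constant times `exp (-2 * b / h)`; this constant is positive because `χ x₀ ≠ 0`.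
Dividing and taking square roots gives the rate `a - b`.
-/

section WeightedIntegral

variable {X : Type*} [MeasurableSpace X] {μ : Measure X} {f w v : X → ℝ} {a b t : ℝ}

theorem integral_mul_exp_neg_mul_le (hw : Integrable w μ) (hw₀ : 0 ≤ w)
    (hfa : ∀ x ∈ Function.support w, a ≤ f x) (ht : 0 ≤ t) :
    ∫ x, w x * Real.exp (-t * f x) ∂μ ≤ (∫ x, w x ∂μ) * Real.exp (-t * a) := by
  rw [← integral_mul_const]
  refine integral_mono_of_nonneg (.of_forall fun x => mul_nonneg (hw₀ x) (Real.exp_nonneg _))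
    (hw.mul_const _) (.of_forall fun x => ?_)
  by_cases hx : w x = 0
  · simp [hx]
  · have hexp : Real.exp (-t * f x) ≤ Real.exp (-t * a) :=
      Real.exp_le_exp.2 (mul_le_mul_of_nonpos_left (hfa x hx) (neg_nonpos.2 ht))
    exact mul_le_mul_of_nonneg_left hexp (hw₀ x)

theorem setIntegral_mul_exp_neg_mul_le_integral {U : Set X} (hU : MeasurableSet U)
    (hw : IntegrableOn w U μ) (hw₀ : 0 ≤ w)
    (hwf : Integrable (fun x => w x * Real.exp (-t * f x)) μ)
    (hfb : ∀ x ∈ U, f x ≤ b) (ht : 0 ≤ t) :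
    (∫ x in U, w x ∂μ) * Real.exp (-t * b) ≤ ∫ x, w x * Real.exp (-t * f x) ∂μ :=
  calc (∫ x in U, w x ∂μ) * Real.exp (-t * b)
      = ∫ x in U, w x * Real.exp (-t * b) ∂μ := (integral_mul_const _ _).symm
    _ ≤ ∫ x in U, w x * Real.exp (-t * f x) ∂μ := by
        refine setIntegral_mono_on (hw.mul_const _) hwf.integrableOn hU fun x hx => ?_
        have hexp : Real.exp (-t * b) ≤ Real.exp (-t * f x) :=
          Real.exp_le_exp.2 (mul_le_mul_of_nonpos_left (hfb x hx) (neg_nonpos.2 ht))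
        exact mul_le_mul_of_nonneg_left hexp (hw₀ x)
    _ ≤ ∫ x, w x * Real.exp (-t * f x) ∂μ :=
        setIntegral_le_integral hwf
          (.of_forall fun x => mul_nonneg (hw₀ x) (Real.exp_nonneg _))

variable [TopologicalSpace X]

theorem setIntegral_pos_of_isOpen [μ.IsOpenPosMeasure] {U : Set X} (hU : IsOpen U)
    (hw : Continuous w) (hw₀ : 0 ≤ w) (hwU : IntegrableOn w U μ) {x₀ : X} (hx₀ : x₀ ∈ U)
    (hwx₀ : w x₀ ≠ 0) : 0 < ∫ x in U, w x ∂μ := by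
  rw [setIntegral_pos_iff_support_of_nonneg_ae (.of_forall hw₀) hwU]
  exact (hw.isOpen_support.inter hU).measure_pos μ ⟨x₀, hwx₀, hx₀⟩

theorem exists_integral_mul_exp_neg_mul_le_mul_integral [OpensMeasurableSpace X]
    [μ.IsOpenPosMeasure] [IsFiniteMeasureOnCompacts μ] (hf : Continuous f)
    (hw : Integrable w μ) (hw₀ : 0 ≤ w) (hfa : ∀ x ∈ Function.support w, a ≤ f x)
    (hv : Continuous v) (hvc : HasCompactSupport v) (hv₀ : 0 ≤ v)
    {x₀ : X} (hvx₀ : v x₀ ≠ 0) (hb : f x₀ < b) :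
    ∃ C > 0, ∀ t ≥ 0, ∫ x, w x * Real.exp (-t * f x) ∂μ ≤
      C * Real.exp (-t * (a - b)) * ∫ x, v x * Real.exp (-t * f x) ∂μ := by
  have hU : IsOpen {x | f x < b} := isOpen_lt hf continuous_const
  have hvU : IntegrableOn v {x | f x < b} μ :=
    (hv.integrable_of_hasCompactSupport hvc).integrableOn
  set W := ∫ x, w x ∂μ
  set V := ∫ x in {x | f x < b}, v x ∂μ
  have hW : 0 ≤ W := integral_nonneg hw₀
  have hV : 0 < V := setIntegral_pos_of_isOpen hU hv hv₀ hvU hb hvx₀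
  refine ⟨(W + 1) / V, by positivity, fun t ht => ?_⟩
  have hvf : Integrable (fun x => v x * Real.exp (-t * f x)) μ :=
    Continuous.integrable_of_hasCompactSupport (by fun_prop) hvc.mul_right
  have hsplit : Real.exp (-t * a) = Real.exp (-t * (a - b)) * Real.exp (-t * b) := by
    rw [← Real.exp_add]; ring_nf
  calc ∫ x, w x * Real.exp (-t * f x) ∂μ
      ≤ W * Real.exp (-t * a) := integral_mul_exp_neg_mul_le hw hw₀ hfa ht
    _ ≤ (W + 1) * Real.exp (-t * a) := by gcongr; exact le_add_of_nonneg_right zero_le_one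
    _ = (W + 1) / V * Real.exp (-t * (a - b)) * (V * Real.exp (-t * b)) := by
        rw [hsplit]; field_simp
    _ ≤ (W + 1) / V * Real.exp (-t * (a - b)) * ∫ x, v x * Real.exp (-t * f x) ∂μ := by
        gcongr
        exact setIntegral_mul_exp_neg_mul_le_integral hU.measurableSet hvU hv₀ hvf
          (fun x hx => le_of_lt hx) ht

end WeightedIntegral

section Gradient

variable {𝕜 E : Type*} [RCLike 𝕜] [NormedAddCommGroup E] [InnerProductSpace 𝕜 E]
  [CompleteSpace E] {χ : E → 𝕜}

theorem continuous_gradient_of_contDiff (hχ : ContDiff 𝕜 1 χ) : Continuous (gradient χ) :=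
  (InnerProductSpace.toDual 𝕜 E).symm.continuous.comp (hχ.continuous_fderiv one_ne_zero)

theorem hasCompactSupport_gradient (hχ : HasCompactSupport χ) :
    HasCompactSupport (gradient χ) :=
  (hχ.fderiv (𝕜 := 𝕜)).comp_left (map_zero (InnerProductSpace.toDual 𝕜 E).symm)

theorem integrable_norm_gradient_sq [MeasurableSpace E] [OpensMeasurableSpace E]
    {μ : Measure E} [IsFiniteMeasureOnCompacts μ]
    (hχ : ContDiff 𝕜 1 χ) (hχc : HasCompactSupport χ) :
    Integrable (fun x => ‖gradient χ x‖ ^ 2) μ := by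
  have hcont : Continuous fun x => ‖gradient χ x‖ ^ 2 :=
    (continuous_gradient_of_contDiff hχ).norm.pow 2
  have hsupp : HasCompactSupport fun x => ‖gradient χ x‖ ^ 2 :=
    (hasCompactSupport_gradient hχc).comp_left (g := fun y => ‖y‖ ^ 2) (by simp)
  exact hcont.integrable_of_hasCompactSupport hsupp

end Gradient

theorem stmt12_general {E : Type*} [NormedAddCommGroup E] [InnerProductSpace ℝ E]
    [CompleteSpace E] [MeasurableSpace E] [OpensMeasurableSpace E] {μ : Measure E}
    [μ.IsOpenPosMeasure] [IsFiniteMeasureOnCompacts μ]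
    {f : E → ℝ} (hf : Continuous f)
    {χ : E → ℝ} (hχ : ContDiff ℝ 1 χ) (hχc : HasCompactSupport χ)
    {x₀ : E} (hχx₀ : χ x₀ ≠ 0)
    {a : ℝ} (hfa : ∀ x ∈ tsupport (gradient χ), a ≤ f x) {δ : ℝ} (hδ : 0 < δ) :
    ∃ C > 0, ∀ h > 0,
      √(∫ x, h ^ 2 * ‖gradient χ x‖ ^ 2 * Real.exp (-2 * f x / h) ∂μ) ≤
        C * h * Real.exp (-(a - f x₀ - δ) / h) *
          √(∫ x, (χ x) ^ 2 * Real.exp (-2 * f x / h) ∂μ) := by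
  have hfa_support : ∀ x ∈ Function.support (fun x => ‖gradient χ x‖ ^ 2), a ≤ f x :=
    fun x hx => hfa x (subset_tsupport _ fun h0 => hx (by simp [h0]))
  have hχ_sq_supp : HasCompactSupport fun x => χ x ^ 2 :=
    hχc.comp_left (g := fun y : ℝ => y ^ 2) (by simp)
  obtain ⟨C, hC, hle⟩ := exists_integral_mul_exp_neg_mul_le_mul_integral (μ := μ) hf
    (integrable_norm_gradient_sq hχ hχc) (fun x => sq_nonneg ‖gradient χ x‖) hfa_support
    (hχ.continuous.pow 2) hχ_sq_supp
    (fun x => sq_nonneg (χ x)) (pow_ne_zero 2 hχx₀) (lt_add_of_pos_right (f x₀) hδ)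
  refine ⟨√C, Real.sqrt_pos.2 hC, fun h hh => ?_⟩
  have hweight (x : E) : -2 * f x / h = -(2 / h) * f x := by ring
  have hrate : Real.exp (-(2 / h) * (a - (f x₀ + δ))) = Real.exp (-(a - f x₀ - δ) / h) ^ 2 := by
    rw [← Real.exp_nat_mul]; ring_nf
  simp only [hweight, mul_assoc (h ^ 2), integral_const_mul]
  set I := ∫ x, ‖gradient χ x‖ ^ 2 * Real.exp (-(2 / h) * f x) ∂μ
  set J := ∫ x, (χ x) ^ 2 * Real.exp (-(2 / h) * f x) ∂μ
  have hIJ : I ≤ C * Real.exp (-(a - f x₀ - δ) / h) ^ 2 * J := hrate ▸ hle (2 / h) (by positivity)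
  calc √(h ^ 2 * I)
      ≤ √((h * Real.exp (-(a - f x₀ - δ) / h)) ^ 2 * (C * J)) :=
        Real.sqrt_le_sqrt ((mul_le_mul_of_nonneg_left hIJ (sq_nonneg h)).trans_eq (by ring))
    _ = √C * h * Real.exp (-(a - f x₀ - δ) / h) * √J := by
        rw [Real.sqrt_mul (sq_nonneg _), Real.sqrt_sq (by positivity), Real.sqrt_mul hC.le]
        ring

/-- Lemma 3.2 of the paper (analytic content): the weighted `L²` norm of `h ∇χ` is
exponentially small, of rate `a − f(x₀) − δ`, compared with the weighted `L²` norm of `χ`. -/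
theorem stmt12 (d : ℕ) (hd : 1 ≤ d)
    (f : EuclideanSpace ℝ (Fin d) → ℝ) (hf : Continuous f)
    (χ : EuclideanSpace ℝ (Fin d) → ℝ) (hχ : ContDiff ℝ 1 χ)
    (hχc : HasCompactSupport χ)
    (x₀ : EuclideanSpace ℝ (Fin d)) (r : ℝ) (hr : 0 < r)
    (hχ1 : ∀ x ∈ Metric.closedBall x₀ r, χ x = 1)
    (a : ℝ) (ha : f x₀ < a)
    (hfa : ∀ x ∈ tsupport (gradient χ), a ≤ f x) :
    ∀ δ ∈ Set.Ioo (0 : ℝ) (a - f x₀), ∃ C > 0, ∃ h₀ > 0, ∀ h : ℝ, 0 < h → h < h₀ →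
      Real.sqrt (∫ x, h ^ 2 * ‖gradient χ x‖ ^ 2 * Real.exp (-2 * f x / h)) ≤
        C * Real.exp (-(a - f x₀ - δ) / h) *
          Real.sqrt (∫ x, (χ x) ^ 2 * Real.exp (-2 * f x / h)) := by
  intro δ hδ
  have hχx₀ : χ x₀ ≠ 0 := by simp [hχ1 x₀ (Metric.mem_closedBall_self hr.le)]
  obtain ⟨C, hC, hle⟩ := stmt12_general (μ := volume) hf hχ hχc hχx₀ hfa hδ.1
  refine ⟨C, hC, 1, one_pos, fun h hh hh1 => (hle h hh).trans ?_⟩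
  gcongr
  exact mul_le_of_le_one_right hC.le hh1.le
end

section
/- Let N ≥ 1 and m be natural numbers, let A be a real m × N matrix, and let δ > 0, M > 0 be constants such that |A_{i j}| ≤ M for all entries. Assume that for every column index k ∈ {1,…,N} there exists a row index i ∈ {1,…,m} such that |A_{i k}| ≥ δ and A_{i j} = 0 for all j > k (i.e. the last nonzero entry of row i sits in column k and has magnitude at least δ). Then there exists β > 0, depending only on N, M and δ, such that ‖A y‖₂ ≥ β ‖y‖₂ for every y ∈ ℝ^N, where ‖·‖₂ denotes the Euclidean norm. (This is the inductive coercivity argument, equation (eq.T) in Step 2 of the proof of Lemma 3.10 of the paper, establishing uniform injectivity of the interaction matrix between quasi-modes.) -/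
/-!
A row whose last nonzero entry `A i k` has norm at least `δ` bounds `‖y k‖` by `‖(A *ᵥ y) i‖`
and the earlier coordinates: `δ ‖y k‖ ≤ ‖(A *ᵥ y) i‖ + M ∑_{j < k} ‖y j‖`. A discrete Grönwall
inequality turns these bounds into `M ∑ ‖y j‖ ≤ (M / δ + 1) ^ N * sup_i ‖(A *ᵥ y) i‖`. Every
`ℓ^p` norm lies between the sup norm and the `ℓ¹` norm, so the same constant serves for all `p`.
-/

open Finset Matrix WithLp
open scoped ENNReal

theorem add_mul_sum_le_mul_add_one_pow {R : Type*} [CommSemiring R] [PartialOrder R]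
    [IsOrderedRing R] {N : ℕ} {u : Fin N → R} {a c : R} (hc : 0 ≤ c)
    (hu : ∀ k, u k ≤ a + c * ∑ j ∈ Iio k, u j) :
    a + c * ∑ j, u j ≤ a * (c + 1) ^ N := by
  have hc₁ : 0 ≤ c + 1 := add_nonneg hc zero_le_one
  induction N with
  | zero => simp
  | succ N ih =>
    have h_init : a + c * ∑ j : Fin N, u j.castSucc ≤ a * (c + 1) ^ N :=
      ih fun k ↦ by simpa only [Fin.sum_Iio_castSucc] using hu k.castSucc
    have h_last : u (Fin.last N) ≤ a + c * ∑ j : Fin N, u j.castSucc := by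
      simpa [Fin.Iio_last_eq_map] using hu (Fin.last N)
    calc a + c * ∑ j, u j
      _ = (a + c * ∑ j : Fin N, u j.castSucc) + c * u (Fin.last N) := by
        rw [Fin.sum_univ_castSucc]; ring
      _ ≤ (a + c * ∑ j : Fin N, u j.castSucc) + c * (a + c * ∑ j : Fin N, u j.castSucc) := by
        gcongr
      _ = (c + 1) * (a + c * ∑ j : Fin N, u j.castSucc) := by ring
      _ ≤ (c + 1) * (a * (c + 1) ^ N) := by gcongr
      _ = a * (c + 1) ^ (N + 1) := by ring

theorem dotProduct_eq_sum_Iio_add_mul {n R : Type*} [Fintype n] [LinearOrder n]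
    [LocallyFiniteOrderBot n] [NonUnitalNonAssocSemiring R] {v : n → R} {k : n}
    (hv : ∀ j, k < j → v j = 0) (w : n → R) :
    v ⬝ᵥ w = ∑ j ∈ Iio k, v j * w j + v k * w k := by
  rw [sum_Iio_add_eq_sum_Iic (f := fun j ↦ v j * w j)]
  refine (sum_subset (subset_univ _) fun j _ hj ↦ ?_).symm
  rw [hv j (by simpa using hj), zero_mul]

theorem norm_le_sum_norm_apply {ι : Type*} [Fintype ι] {E : ι → Type*}
    [∀ i, SeminormedAddCommGroup (E i)] {p : ℝ≥0∞} [Fact (1 ≤ p)] (x : PiLp p E) :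
    ‖x‖ ≤ ∑ i, ‖x i‖ := by
  classical
  have hx : x = ∑ i, PiLp.single p i (x i) := by
    simp only [← PiLp.toLp_single, ← toLp_sum, univ_sum_single, toLp_ofLp]
  calc ‖x‖
    _ = ‖∑ i, PiLp.single p i (x i)‖ := congrArg norm hx
    _ ≤ ∑ i, ‖PiLp.single p i (x i)‖ := norm_sum_le _ _
    _ = ∑ i, ‖x i‖ := by simp only [PiLp.norm_single]

section NormedRing

variable {R : Type*} [NormedRing R] [NormMulClass R] {M δ : ℝ}

theorem mul_norm_le_norm_dotProduct_add {n : Type*} [Fintype n] [LinearOrder n]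
    [LocallyFiniteOrderBot n] {v : n → R} {k : n} (hvM : ∀ j < k, ‖v j‖ ≤ M) (hvδ : δ ≤ ‖v k‖)
    (hv : ∀ j, k < j → v j = 0) (w : n → R) :
    δ * ‖w k‖ ≤ ‖v ⬝ᵥ w‖ + M * ∑ j ∈ Iio k, ‖w j‖ := by
  have h_lower : ‖∑ j ∈ Iio k, v j * w j‖ ≤ M * ∑ j ∈ Iio k, ‖w j‖ := by
    rw [mul_sum]
    refine norm_sum_le_of_le _ fun j hj ↦ ?_
    rw [norm_mul]
    gcongr
    exact hvM j (mem_Iio.mp hj)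
  calc δ * ‖w k‖
    _ ≤ ‖v k‖ * ‖w k‖ := by gcongr
    _ = ‖v ⬝ᵥ w - ∑ j ∈ Iio k, v j * w j‖ := by
      rw [dotProduct_eq_sum_Iio_add_mul hv, add_sub_cancel_left, norm_mul]
    _ ≤ ‖v ⬝ᵥ w‖ + ‖∑ j ∈ Iio k, v j * w j‖ := norm_sub_le _ _
    _ ≤ ‖v ⬝ᵥ w‖ + M * ∑ j ∈ Iio k, ‖w j‖ := by gcongr

variable {m : Type*} {N : ℕ} {A : Matrix m (Fin N) R}

theorem mul_sum_norm_le_of_norm_mulVec_le (hM : 0 ≤ M) (hδ : 0 < δ) (hA : ∀ i j, ‖A i j‖ ≤ M)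
    (hrow : ∀ k, ∃ i, δ ≤ ‖A i k‖ ∧ ∀ j, k < j → A i j = 0) {y : Fin N → R} {S : ℝ}
    (hS₀ : 0 ≤ S) (hS : ∀ i, ‖(A *ᵥ y) i‖ ≤ S) :
    M * ∑ j, ‖y j‖ ≤ S * (M / δ + 1) ^ N := by
  have h_coord (k : Fin N) : ‖y k‖ ≤ S / δ + M / δ * ∑ j ∈ Iio k, ‖y j‖ := by
    obtain ⟨i, hik, h_zero⟩ := hrow k
    rw [div_mul_eq_mul_div, ← add_div, le_div_iff₀' hδ]
    exact (mul_norm_le_norm_dotProduct_add (fun j _ ↦ hA i j) hik h_zero y).trans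
      (by gcongr; exact hS i)
  have h_gronwall : M / δ * ∑ j, ‖y j‖ ≤ S / δ * (M / δ + 1) ^ N :=
    (le_add_of_nonneg_left (by positivity)).trans
      (add_mul_sum_le_mul_add_one_pow (by positivity) h_coord)
  rwa [div_mul_eq_mul_div, div_mul_eq_mul_div, div_le_div_iff_of_pos_right hδ] at h_gronwall

theorem stmt13_general [Fintype m] (p : ℝ≥0∞) [Fact (1 ≤ p)] (hM : 0 ≤ M) (hδ : 0 < δ)
    (hA : ∀ i j, ‖A i j‖ ≤ M)
    (hrow : ∀ k, ∃ i, δ ≤ ‖A i k‖ ∧ ∀ j, k < j → A i j = 0) (y : Fin N → R) :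
    M / (M / δ + 1) ^ N * ‖toLp p y‖ ≤ ‖toLp p (A *ᵥ y)‖ := by
  rw [div_mul_eq_mul_div, div_le_iff₀ (by positivity)]
  calc M * ‖toLp p y‖
    _ ≤ M * ∑ j, ‖y j‖ := by
      gcongr
      exact norm_le_sum_norm_apply (toLp p y)
    _ ≤ ‖toLp p (A *ᵥ y)‖ * (M / δ + 1) ^ N :=
      mul_sum_norm_le_of_norm_mulVec_le hM hδ hA hrow (norm_nonneg _)
        (PiLp.norm_apply_le (toLp p (A *ᵥ y)))

end NormedRing

/-- Inductive coercivity argument (equation (eq.T) in Step 2 of the proof of Lemma 3.10):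
a bounded matrix whose every column dominates a row whose later entries vanish is
uniformly injective, with a constant depending only on `N`, `M`, `δ`. -/
theorem stmt13 (N : ℕ) (hN : 1 ≤ N) (M δ : ℝ) (hM : 0 < M) (hδ : 0 < δ) :
    ∃ β > 0, ∀ (m : ℕ) (A : Matrix (Fin m) (Fin N) ℝ),
      (∀ i j, |A i j| ≤ M) →
      (∀ k : Fin N, ∃ i : Fin m, δ ≤ |A i k| ∧ ∀ j : Fin N, k < j → A i j = 0) →
      ∀ y : Fin N → ℝ,
        β * Real.sqrt (∑ j, (y j) ^ 2) ≤ Real.sqrt (∑ i, (A.mulVec y i) ^ 2) := by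
  refine ⟨M / (M / δ + 1) ^ N, by positivity, fun m A hA hrow y ↦ ?_⟩
  simpa [PiLp.norm_eq_of_L2] using stmt13_general 2 hM.le hδ hA hrow y
end

section
/- Let z₁ < z₂ and let f : [z₁, z₂] → ℝ be a C^∞ function whose derivative vanishes exactly at three points x₁ < z < x₂ of (z₁, z₂), with f(x₁) = f(x₂) < f(z₁) = f(z₂) < f(z). Then for every x ∈ (z₁, z) there exists c > 0 such that, as h → 0⁺, (∫_{z₁}^{x} e^{2f(t)/h} dt) / (∫_{z₁}^{z₂} e^{2f(t)/h} dt) = O(e^{−c/h}); equivalently (∫_{x}^{z₂} e^{2f(t)/h} dt) / (∫_{z₁}^{z₂} e^{2f(t)/h} dt) = 1 + O(e^{−c/h}). (By the explicit one-dimensional exit law (formula (exp) of Appendix B), this is the claim (1.13) of the paper: for the symmetric double-well potential, starting from x ∈ (z₁, z), the process exits through z₁ with probability 1 + O(e^{−c/h}).) -/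
open MeasureTheory

/-!
A continuous function on `[z₁, z]` that starts below `f z` and whose interior local maxima all lie
below `f z` stays strictly below `f z` on `[z₁, z)`. Hence for `x < z` the maximum `a` of `f` over
`[z₁, x]` is less than `f z`. Choose `b` strictly between `a` and `f z`; by continuity `f > b` on an
interval of some length `δ > 0` ending at `z`. The numerator is then at most
`(x - z₁) * exp (2 * a / h)` and the denominator at least `δ * exp (2 * b / h)`, so the exponential
rate is `2 * (b - a)`.
-/

section LaplaceEstimate

variable {α : Type*} [MeasurableSpace α] {μ : Measure α} {φ : α → ℝ} {s t u : Set α} {a b h : ℝ}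

theorem setIntegral_exp_div_le (hh : 0 < h) (hs : μ s ≠ ⊤) (hφ : ∀ x ∈ s, φ x ≤ a) :
    ∫ x in s, Real.exp (φ x / h) ∂μ ≤ Real.exp (a / h) * μ.real s := by
  refine (Real.le_norm_self _).trans
    (norm_setIntegral_le_of_norm_le_const hs.lt_top fun x hx => ?_)
  rw [Real.norm_eq_abs, Real.abs_exp]
  have := hφ x hx
  gcongr

theorem le_setIntegral_exp_div (hh : 0 < h) (hu : MeasurableSet u) (hμu : μ u ≠ ⊤) (hut : u ⊆ t)
    (hφ : ∀ x ∈ u, b ≤ φ x) (hint : IntegrableOn (fun x => Real.exp (φ x / h)) t μ) :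
    Real.exp (b / h) * μ.real u ≤ ∫ x in t, Real.exp (φ x / h) ∂μ :=
  calc Real.exp (b / h) * μ.real u
      ≤ ∫ x in u, Real.exp (φ x / h) ∂μ := by
        refine setIntegral_ge_of_const_le_real hu hμu (fun x hx => ?_) (hint.mono_set hut)
        have := hφ x hx
        gcongr
    _ ≤ ∫ x in t, Real.exp (φ x / h) ∂μ :=
        setIntegral_mono_set hint (ae_of_all _ fun _ => Real.exp_nonneg _) hut.eventuallyLE

theorem setIntegral_exp_div_div_setIntegral_le (hh : 0 < h) (hs : μ s ≠ ⊤)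
    (hu : MeasurableSet u) (hμu₀ : μ u ≠ 0) (hμu : μ u ≠ ⊤) (hut : u ⊆ t)
    (hφs : ∀ x ∈ s, φ x ≤ a) (hφu : ∀ x ∈ u, b ≤ φ x)
    (hint : IntegrableOn (fun x => Real.exp (φ x / h)) t μ) :
    (∫ x in s, Real.exp (φ x / h) ∂μ) / ∫ x in t, Real.exp (φ x / h) ∂μ ≤
      μ.real s / μ.real u * Real.exp (-(b - a) / h) := by
  have hu_pos : 0 < μ.real u := ENNReal.toReal_pos hμu₀ hμu
  calc (∫ x in s, Real.exp (φ x / h) ∂μ) / ∫ x in t, Real.exp (φ x / h) ∂μ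
      ≤ (Real.exp (a / h) * μ.real s) / (Real.exp (b / h) * μ.real u) :=
        div_le_div₀ (by positivity) (setIntegral_exp_div_le hh hs hφs) (by positivity)
          (le_setIntegral_exp_div hh hu hμu hut hφu hint)
    _ = μ.real s / μ.real u * Real.exp (-(b - a) / h) := by
        rw [mul_div_mul_comm, ← Real.exp_sub, mul_comm, neg_sub, sub_div]

end LaplaceEstimate

section LocalMaxima

open Set

theorem lt_of_forall_isLocalMax_lt {α β : Type*} [LinearOrder α] [TopologicalSpace α]
    [OrderClosedTopology α] [CompactIccSpace α] [LinearOrder β] [TopologicalSpace β]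
    [ClosedIciTopology β] {f : α → β} {a b t : α} (hf : ContinuousOn f (Icc a b)) (hab : f a < f b)
    (hmax : ∀ q ∈ Ioo a b, IsLocalMax f q → f q < f b) (ht : t ∈ Ico a b) : f t < f b := by
  have lt_of_isMaxOn : ∀ q ∈ Ico a b, IsMaxOn f (Icc a b) q → f q < f b := by
    intro q hq hqmax
    rcases hq.1.eq_or_lt with rfl | haq
    · exact hab
    · exact hmax q ⟨haq, hq.2⟩ (hqmax.isLocalMax (Icc_mem_nhds haq hq.2))
  have hab_le : a ≤ b := ht.1.trans ht.2.le
  obtain ⟨p, hp, hpmax⟩ := isCompact_Icc.exists_isMaxOn (nonempty_Icc.2 hab_le) hf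
  obtain rfl : p = b := by
    by_contra hpb
    exact (lt_of_isMaxOn p ⟨hp.1, hp.2.lt_of_ne hpb⟩ hpmax).not_ge (hpmax (right_mem_Icc.2 hab_le))
  by_contra! hle
  exact (lt_of_isMaxOn t ht fun y hy => (hpmax hy).trans hle).not_ge hle

theorem mem_setOf_derivWithin_eq_zero_of_isLocalMax {f : ℝ → ℝ} {a b t : ℝ} (ht : t ∈ Ioo a b)
    (hmax : IsLocalMax f t) : t ∈ {q ∈ Icc a b | derivWithin f (Icc a b) q = 0} := by
  refine ⟨Ioo_subset_Icc_self ht, ?_⟩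
  rw [derivWithin_of_mem_nhds (Icc_mem_nhds ht.1 ht.2), hmax.deriv_eq_zero]

end LocalMaxima

section Interval

open Set

variable {f : ℝ → ℝ} {a b x z : ℝ}

theorem intervalIntegrable_exp_div (hf : ContinuousOn f (Icc a b)) (hab : a ≤ b) (h : ℝ) :
    IntervalIntegrable (fun t => Real.exp (f t / h)) volume a b :=
  (hf.div_const h).rexp.intervalIntegrable_of_Icc hab

theorem integral_exp_div_pos (hf : ContinuousOn f (Icc a b)) (hab : a < b) (h : ℝ) :
    0 < ∫ t in a..b, Real.exp (f t / h) :=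
  intervalIntegral.intervalIntegral_pos_of_pos (intervalIntegrable_exp_div hf hab.le h)
    (fun _ => Real.exp_pos _) hab

theorem exists_integral_exp_div_div_integral_le (hf : ContinuousOn f (Icc a b)) (hax : a < x)
    (hxz : x < z) (hzb : z ≤ b) (hlt : ∀ t ∈ Icc a x, f t < f z) :
    ∃ c > 0, ∃ C > 0, ∀ h > 0,
      (∫ t in a..x, Real.exp (f t / h)) / (∫ t in a..b, Real.exp (f t / h)) ≤
        C * Real.exp (-c / h) := by
  have hxb : x ≤ b := hxz.le.trans hzb
  have haz : a < z := hax.trans hxz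
  obtain ⟨m, hm, hmax⟩ := isCompact_Icc.exists_isMaxOn (nonempty_Icc.2 hax.le)
    (hf.mono (Icc_subset_Icc_right hxb))
  obtain ⟨r, hmr, hrz⟩ := exists_between (hlt m hm)
  obtain ⟨l, hl, hlz⟩ : ∃ l ∈ Ico a z, Ioo l z ⊆ {t | r < f t} := by
    have hcont : ContinuousWithinAt f (Ioo a z) z :=
      (hf z ⟨haz.le, hzb⟩).mono (Ioo_subset_Icc_self.trans (Icc_subset_Icc_right hzb))
    rw [← mem_nhdsLT_iff_exists_mem_Ico_Ioo_subset haz, ← nhdsWithin_Ioo_eq_nhdsLT haz]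
    exact hcont.eventually (lt_mem_nhds hrz)
  refine ⟨r - f m, sub_pos.2 hmr, (x - a) / (z - l),
    div_pos (sub_pos.2 hax) (sub_pos.2 hl.2), fun h hh => ?_⟩
  have hint := (intervalIntegrable_iff_integrableOn_Ioc_of_le (hax.le.trans hxb)).1
    (intervalIntegrable_exp_div hf (hax.le.trans hxb) h)
  have key := setIntegral_exp_div_div_setIntegral_le (s := Ioc a x) (u := Ioo l z) hh (by simp)
    measurableSet_Ioo (by simp [hl.2]) (by simp)
    (Ioo_subset_Ioc_self.trans (Ioc_subset_Ioc hl.1 hzb))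
    (fun t ht => hmax (Ioc_subset_Icc_self ht)) (fun t ht => (hlz ht).le) hint
  rwa [Real.volume_real_Ioc_of_le hax.le, Real.volume_real_Ioo_of_le hl.2.le,
    ← intervalIntegral.integral_of_le hax.le,
    ← intervalIntegral.integral_of_le (hax.le.trans hxb)] at key

theorem integral_right_div_sub_one {μ : Measure ℝ} (hax : IntervalIntegrable f μ a x)
    (hxb : IntervalIntegrable f μ x b) (hne : ∫ t in a..b, f t ∂μ ≠ 0) :
    (∫ t in x..b, f t ∂μ) / (∫ t in a..b, f t ∂μ) - 1 =
      -((∫ t in a..x, f t ∂μ) / ∫ t in a..b, f t ∂μ) := by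
  rw [div_sub_one hne, ← neg_div,
    ← intervalIntegral.integral_add_adjacent_intervals hax hxb, sub_add_cancel_right]

end Interval

theorem stmt15_general {z₁ z₂ z : ℝ} {f : ℝ → ℝ} (hf : ContinuousOn f (Set.Icc z₁ z₂))
    (hz : z ≤ z₂) (hv : f z₁ < f z) (hmax : ∀ t ∈ Set.Ioo z₁ z, IsLocalMax f t → f t < f z) :
    ∀ x ∈ Set.Ioo z₁ z, ∃ c > 0, ∃ C > 0, ∃ h₀ > 0, ∀ h : ℝ, 0 < h → h < h₀ →
      |(∫ t in z₁..x, Real.exp (2 * f t / h)) /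
          (∫ t in z₁..z₂, Real.exp (2 * f t / h))| ≤ C * Real.exp (-c / h) ∧
      |(∫ t in x..z₂, Real.exp (2 * f t / h)) /
          (∫ t in z₁..z₂, Real.exp (2 * f t / h)) - 1| ≤ C * Real.exp (-c / h) := by
  rintro x ⟨hz₁x, hxz⟩
  have hxz₂ : x < z₂ := hxz.trans_le hz
  have hlt : ∀ t ∈ Set.Icc z₁ x, f t < f z := fun t ht =>
    lt_of_forall_isLocalMax_lt (hf.mono (Set.Icc_subset_Icc_right hz)) hv hmax
      ⟨ht.1, ht.2.trans_lt hxz⟩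
  have hf₂ : ContinuousOn (fun t => 2 * f t) (Set.Icc z₁ z₂) := continuousOn_const.mul hf
  obtain ⟨c, hc, C, hC, hle⟩ := exists_integral_exp_div_div_integral_le hf₂ hz₁x hxz hz
    fun t ht => mul_lt_mul_of_pos_left (hlt t ht) two_pos
  refine ⟨c, hc, C, hC, 1, one_pos, fun h hh _ => ?_⟩
  have hleft := hf₂.mono (Set.Icc_subset_Icc_right hxz₂.le)
  have hright := hf₂.mono (Set.Icc_subset_Icc_left hz₁x.le)
  have hden := integral_exp_div_pos hf₂ (hz₁x.trans hxz₂) h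
  have habs := (abs_of_pos (div_pos (integral_exp_div_pos hleft hz₁x h) hden)).trans_le (hle h hh)
  refine ⟨habs, ?_⟩
  rwa [integral_right_div_sub_one (intervalIntegrable_exp_div hleft hz₁x.le h)
    (intervalIntegrable_exp_div hright hxz₂.le h) hden.ne', abs_neg]

/-- Claim (1.13) of the paper via the explicit one-dimensional exit law: for the symmetric
double-well potential, starting from `x ∈ (z₁, z)`, the relative weight of `(z₁, x)` is
exponentially small when `h → 0`. -/
theorem stmt15 (z₁ z₂ x₁ z x₂ : ℝ) (hz : z₁ < z₂)
    (f : ℝ → ℝ) (hf : ContDiffOn ℝ (⊤ : ℕ∞) f (Set.Icc z₁ z₂))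
    (h₁ : z₁ < x₁) (h₂ : x₁ < z) (h₃ : z < x₂) (h₄ : x₂ < z₂)
    (hcrit : {t ∈ Set.Icc z₁ z₂ | derivWithin f (Set.Icc z₁ z₂) t = 0} = {x₁, z, x₂})
    (hv1 : f x₁ = f x₂) (hv2 : f z₁ = f z₂) (hv3 : f x₁ < f z₁) (hv4 : f z₁ < f z) :
    ∀ x ∈ Set.Ioo z₁ z, ∃ c > 0, ∃ C > 0, ∃ h₀ > 0, ∀ h : ℝ, 0 < h → h < h₀ →
      |(∫ t in z₁..x, Real.exp (2 * f t / h)) /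
          (∫ t in z₁..z₂, Real.exp (2 * f t / h))| ≤ C * Real.exp (-c / h) ∧
      |(∫ t in x..z₂, Real.exp (2 * f t / h)) /
          (∫ t in z₁..z₂, Real.exp (2 * f t / h)) - 1| ≤ C * Real.exp (-c / h) :=
  stmt15_general hf.continuousOn (h₃.trans h₄).le hv4 fun t ht hmax => by
    rcases hcrit.subset (mem_setOf_derivWithin_eq_zero_of_isLocalMax
      ⟨ht.1, by linarith [ht.2]⟩ hmax) with rfl | rfl | rfl <;> linarith [ht.2]
end

section
/- Let z₁ < z₂ and let f : [z₁, z₂] → ℝ be a C^∞ function whose derivative vanishes exactly at three points x₁ < z < x₂ of (z₁, z₂), with f(x₁) < f(x₂) < f(z) and f(z) = f(z₁) = f(z₂), and such that f''(z) < 0, f'(z₁) < 0 and f'(z₂) > 0. Then for every x ∈ (z₁, z), as h → 0⁺, (∫_{z₁}^{x} e^{2f(t)/h} dt) / (∫_{z₁}^{z₂} e^{2f(t)/h} dt) = (√(|f''(z)|) / (2 |f'(z₁)| √π)) · √h + O(h). (By the explicit one-dimensional exit law (formula (exp) of Appendix B) this is assertion (1.17) of Section 1.4.5 of the paper: when assumption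 (A4) fails, the probability of exiting through z₂ starting from x ∈ C_max = (z₁, z) is exactly of order √h, not exponentially small.) -/
open MeasureTheory

/-!
The common factor `exp (2 * f z / h)` cancels in the quotient, so `f` may be replaced by
`f - f z`, whose maximum `0` is attained at the two endpoints, where it decreases linearly, and at
`z`, where it decreases quadratically. By Laplace's method a maximum `x₀` approached from one side
as `-a * |t - x₀| ^ p + O(|t - x₀| ^ q)` contributes `Γ (1 / p + 1) * (h / a) ^ (1 / p)` to the
integral of `exp ((f t - f z) / h)`, with error `O(h ^ ((q + 1) / p - 1))`. An endpoint (`p = 1`,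
`q = 2`) thus contributes `h / |f' x₀| + O(h ^ 2)`, and the two sides of `z` (`p = 2`, `q = 3`)
contribute `√(2 * π * h / |f'' z|) + O(h)`. The numerator only sees `z₁` and the denominator is
dominated by `z`; dividing, with `h / 2` in place of `h`, gives the claim.
-/

open Asymptotics Filter Interval Real Set Topology

section LaplaceMethod

variable {p q a : ℝ} {g : ℝ → ℝ}

lemma abs_exp_sub_exp_le {u v w : ℝ} (hu : u ≤ w) (hv : v ≤ w) :
    |exp u - exp v| ≤ exp w * |u - v| :=
  (convex_Iic w).norm_image_sub_le_of_norm_deriv_le (fun _ _ ↦ differentiableAt_exp)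
    (fun x hx ↦ by simpa using hx) hv hu

lemma isLittleO_rpow_rpow_nhdsGT_zero (hpq : p < q) :
    (fun s : ℝ ↦ s ^ q) =o[𝓝[>] 0] fun s ↦ s ^ p := by
  have hlim : Tendsto (fun s : ℝ ↦ s ^ (q - p)) (𝓝[>] 0) (𝓝 0) := by
    simpa [zero_rpow (sub_pos.2 hpq).ne'] using
      (continuousAt_rpow_const 0 (q - p) (.inr (sub_pos.2 hpq).le)).tendsto.mono_left
        nhdsWithin_le_nhds
  refine isLittleO_of_tendsto' ?_ (hlim.congr' ?_) <;>
    filter_upwards [self_mem_nhdsWithin] with s (hs : 0 < s)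
  · exact fun h ↦ absurd h (rpow_pos_of_pos hs p).ne'
  · exact rpow_sub hs q p

lemma exists_forall_le_neg_mul_rpow (ha : 0 < a) (hg : ContinuousOn g (Icc 0 1))
    (hneg : ∀ s ∈ Ioc 0 1, g s < 0)
    (hloc : (fun s ↦ g s + a * s ^ p) =o[𝓝[>] 0] fun s ↦ s ^ p) :
    ∃ c > 0, ∀ s ∈ Ioc 0 1, g s ≤ -c * s ^ p := by
  have hlim : Tendsto (fun s ↦ -g s / s ^ p) (𝓝[>] 0) (𝓝 a) := by
    refine (hloc.tendsto_div_nhds_zero.const_sub a).congr' ?_ |>.trans (by simp)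
    filter_upwards [self_mem_nhdsWithin] with s (hs : 0 < s)
    field_simp
    ring
  have hdiff : Icc (0 : ℝ) 1 \ {0} = Ioc 0 1 := Icc_sdiff_left
  have hcont : ContinuousOn (Function.update (fun s ↦ -g s / s ^ p) 0 a) (Icc 0 1) := by
    rw [continuousOn_update_iff, hdiff]
    refine ⟨(hg.mono Ioc_subset_Icc_self).neg.div
      (continuousOn_id.rpow_const fun s hs ↦ .inl hs.1.ne') fun s hs ↦ (rpow_pos_of_pos hs.1 p).ne',
      fun _ ↦ hlim.mono_left (nhdsWithin_mono 0 fun s hs ↦ hs.1)⟩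
  obtain ⟨c, hc, hle⟩ := isCompact_Icc.exists_forall_le' hcont (a := 0) fun s hs ↦ by
    rcases hs.1.eq_or_lt with rfl | hs0
    · simpa using ha
    · rw [Function.update_of_ne hs0.ne']
      exact div_pos (neg_pos.2 (hneg s ⟨hs0, hs.2⟩)) (rpow_pos_of_pos hs0 p)
  refine ⟨c, hc, fun s hs ↦ ?_⟩
  have hcs := hle s (Ioc_subset_Icc_self hs)
  rw [Function.update_of_ne hs.1.ne', le_div_iff₀ (rpow_pos_of_pos hs.1 p)] at hcs
  linarith

lemma isBigO_principal_Ioc_of_nhdsGT {u v : ℝ → ℝ} {b c : ℝ} (hu : ContinuousOn u (Ioc b c))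
    (hv : ContinuousOn v (Ioc b c)) (hv₀ : ∀ s ∈ Ioc b c, v s ≠ 0) (hloc : u =O[𝓝[>] b] v) :
    u =O[𝓟 (Ioc b c)] v := by
  obtain ⟨K, hK⟩ := hloc.bound
  obtain ⟨δ, hδ, hlt⟩ := (nhdsGT_basis b).eventually_iff.1 hK
  have hnear : u =O[𝓟 (Ioo b δ)] v := isBigO_principal.2 ⟨K, fun s hs ↦ hlt hs⟩
  have hsub : Icc δ c ⊆ Ioc b c := fun s hs ↦ ⟨hδ.trans_le hs.1, hs.2⟩
  have hfar : u =O[𝓟 (Icc δ c)] v := ((hu.mono hsub).isBigO_principal isCompact_Icc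
    (norm_ne_zero_iff.2 one_ne_zero)).trans <|
      (hv.mono hsub).isBigO_rev_principal isCompact_Icc (fun s hs ↦ hv₀ s (hsub hs)) (1 : ℝ)
  refine (hnear.sup hfar).mono ?_
  rw [sup_principal, principal_mono]
  exact fun s hs ↦ (lt_or_ge s δ).imp (⟨hs.1, ·⟩) (⟨·, hs.2⟩)

lemma isBigO_integral_rpow_mul_exp_neg_div_mul_rpow (hp : 0 < p) (hq : -1 < q) (ha : 0 < a) :
    (fun h ↦ ∫ s in Ioi 0, s ^ q * exp (-(a / h) * s ^ p)) =O[𝓝[>] 0]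
      fun h : ℝ ↦ h ^ ((q + 1) / p) := by
  refine (isBigO_const_mul_self (a ^ (-(q + 1) / p) * (1 / p) * Gamma ((q + 1) / p)) _ _).congr' ?_
    .rfl
  filter_upwards [self_mem_nhdsWithin] with h (hh : 0 < h)
  rw [integral_rpow_mul_exp_neg_mul_rpow hp hq (by positivity), div_rpow ha.le hh.le,
    neg_div, rpow_neg hh.le]
  field_simp

lemma norm_setIntegral_le_of_norm_le {α E : Type*} [MeasurableSpace α] {μ : Measure α}
    [NormedAddCommGroup E] [NormedSpace ℝ E] {S T : Set α} {F : α → E} {G : α → ℝ}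
    (hS : MeasurableSet S) (hT : MeasurableSet T) (hST : S ⊆ T) (hG : IntegrableOn G T μ)
    (hG₀ : ∀ t ∈ T, 0 ≤ G t) (hle : ∀ t ∈ S, ‖F t‖ ≤ G t) :
    ‖∫ t in S, F t ∂μ‖ ≤ ∫ t in T, G t ∂μ :=
  (norm_integral_le_of_norm_le (hG.mono_set hST) ((ae_restrict_mem hS).mono hle)).trans <|
    setIntegral_mono_set hG ((ae_restrict_mem hT).mono hG₀) (ae_of_all μ hST)

lemma exists_norm_exp_div_sub_exp_neg_le (hpq : p < q) (ha : 0 < a)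
    (hg : ContinuousOn g (Icc 0 1)) (hneg : ∀ s ∈ Ioc 0 1, g s < 0)
    (hloc : (fun s ↦ g s + a * s ^ p) =O[𝓝[>] 0] fun s ↦ s ^ q) :
    ∃ c > 0, ∃ K > 0, ∀ h > 0, ∀ s ∈ Ioc 0 1,
      ‖exp (g s / h) - exp (-(a / h) * s ^ p)‖ ≤ K / h * (s ^ q * exp (-(c / h) * s ^ p)) := by
  have hcont (r : ℝ) : ContinuousOn (fun s : ℝ ↦ s ^ r) (Ioc 0 1) :=
    continuousOn_id.rpow_const fun s hs ↦ .inl hs.1.ne'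
  obtain ⟨c, hc, hgc⟩ := exists_forall_le_neg_mul_rpow ha hg hneg <|
    hloc.trans_isLittleO (isLittleO_rpow_rpow_nhdsGT_zero hpq)
  obtain ⟨K, hK, hgK⟩ := (isBigO_principal_Ioc_of_nhdsGT
    ((hg.mono Ioc_subset_Icc_self).add ((hcont p).const_mul a)) (hcont q)
    (fun s hs ↦ (rpow_pos_of_pos hs.1 q).ne') hloc).exists_pos
  refine ⟨min a c, lt_min ha hc, K, hK, fun h hh s hs ↦ ?_⟩
  have hsp : 0 < s ^ p := rpow_pos_of_pos hs.1 p
  have hu : g s / h ≤ -(min a c / h) * s ^ p := by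
    rw [div_le_iff₀ hh]
    calc g s ≤ -c * s ^ p := hgc s hs
      _ ≤ -min a c * s ^ p := by gcongr; exact min_le_right a c
      _ = -(min a c / h) * s ^ p * h := by field_simp
  have hv : -(a / h) * s ^ p ≤ -(min a c / h) * s ^ p := by gcongr; exact min_le_left a c
  have hdiff : |g s / h - -(a / h) * s ^ p| ≤ K / h * s ^ q := by
    have hgs : |g s + a * s ^ p| ≤ K * s ^ q := by
      simpa [abs_of_pos (rpow_pos_of_pos hs.1 q)] using isBigOWith_principal.1 hgK s hs
    calc |g s / h - -(a / h) * s ^ p| = |(g s + a * s ^ p) / h| := by ring_nf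
      _ = |g s + a * s ^ p| / h := by rw [abs_div, abs_of_pos hh]
      _ ≤ K * s ^ q / h := by gcongr
      _ = K / h * s ^ q := by ring
  calc |exp (g s / h) - exp (-(a / h) * s ^ p)|
      ≤ exp (-(min a c / h) * s ^ p) * |g s / h - -(a / h) * s ^ p| := abs_exp_sub_exp_le hu hv
    _ ≤ exp (-(min a c / h) * s ^ p) * (K / h * s ^ q) := by gcongr
    _ = K / h * (s ^ q * exp (-(min a c / h) * s ^ p)) := by ring

lemma isBigO_setIntegral_exp_div_sub_exp_neg (hp : 0 < p) (hpq : p < q) (ha : 0 < a)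
    (hg : ContinuousOn g (Icc 0 1)) (hneg : ∀ s ∈ Ioc 0 1, g s < 0)
    (hloc : (fun s ↦ g s + a * s ^ p) =O[𝓝[>] 0] fun s ↦ s ^ q) :
    (fun h ↦ ∫ s in Ioc 0 1, (exp (g s / h) - exp (-(a / h) * s ^ p))) =O[𝓝[>] 0]
      fun h : ℝ ↦ h ^ ((q + 1) / p - 1) := by
  obtain ⟨c, hc, K, hK, hle⟩ := exists_norm_exp_div_sub_exp_neg_le hpq ha hg hneg hloc
  have hq : -1 < q := by linarith
  have hmaj : (fun h ↦ K / h * ∫ s in Ioi 0, s ^ q * exp (-(c / h) * s ^ p)) =O[𝓝[>] 0]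
      fun h : ℝ ↦ h ^ ((q + 1) / p - 1) := by
    refine ((isBigO_const_mul_self K Inv.inv _).mul
      (isBigO_integral_rpow_mul_exp_neg_div_mul_rpow hp hq hc)).congr' .rfl ?_
    filter_upwards [self_mem_nhdsWithin] with h (hh : 0 < h)
    rw [rpow_sub_one hh.ne', inv_mul_eq_div]
  refine .trans (.of_norm_eventuallyLE ?_) hmaj
  filter_upwards [self_mem_nhdsWithin] with h (hh : 0 < h)
  rw [← integral_const_mul]
  refine norm_setIntegral_le_of_norm_le measurableSet_Ioc measurableSet_Ioi Ioc_subset_Ioi_self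
    ((integrableOn_rpow_mul_exp_neg_mul_rpow hq hp (div_pos hc hh)).const_mul _)
    (fun s (hs : 0 < s) ↦ by positivity) (hle h hh)

lemma isBigO_integral_Ioi_one_exp_neg (hp : 0 < p) (hq : 0 ≤ q) (ha : 0 < a) :
    (fun h ↦ ∫ s in Ioi 1, exp (-(a / h) * s ^ p)) =O[𝓝[>] 0]
      fun h : ℝ ↦ h ^ ((q + 1) / p) := by
  have hq' : -1 < q := by linarith
  refine .trans (.of_norm_eventuallyLE ?_)
    (isBigO_integral_rpow_mul_exp_neg_div_mul_rpow hp hq' ha)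
  filter_upwards [self_mem_nhdsWithin] with h (hh : 0 < h)
  refine norm_setIntegral_le_of_norm_le measurableSet_Ioi measurableSet_Ioi
    (Ioi_subset_Ioi zero_le_one) (integrableOn_rpow_mul_exp_neg_mul_rpow hq' hp (div_pos ha hh))
    (fun s (hs : 0 < s) ↦ by positivity) fun s (hs : 1 < s) ↦ ?_
  rw [norm_of_nonneg (exp_pos _).le]
  exact le_mul_of_one_le_left (exp_pos _).le (one_le_rpow hs.le hq)

lemma integral_exp_neg_div_mul_rpow {h : ℝ} (hp : 0 < p) (ha : 0 < a) (hh : 0 < h) :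
    ∫ s in Ioi 0, exp (-(a / h) * s ^ p) = Gamma (1 / p + 1) * (h / a) ^ (1 / p) := by
  rw [integral_exp_neg_mul_rpow hp (div_pos ha hh), neg_div, rpow_neg (div_pos ha hh).le,
    ← inv_rpow (div_pos ha hh).le, inv_div, mul_comm]

theorem isBigO_setIntegral_exp_div_sub_Gamma_mul (hp : 0 < p) (hpq : p < q) (ha : 0 < a)
    (hg : ContinuousOn g (Icc 0 1)) (hneg : ∀ s ∈ Ioc 0 1, g s < 0)
    (hloc : (fun s ↦ g s + a * s ^ p) =O[𝓝[>] 0] fun s ↦ s ^ q) :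
    (fun h ↦ (∫ s in Ioc 0 1, exp (g s / h)) - Gamma (1 / p + 1) * (h / a) ^ (1 / p)) =O[𝓝[>] 0]
      fun h : ℝ ↦ h ^ ((q + 1) / p - 1) := by
  have htail : (fun h ↦ ∫ s in Ioi 1, exp (-(a / h) * s ^ p)) =O[𝓝[>] 0]
      fun h : ℝ ↦ h ^ ((q + 1) / p - 1) :=
    (isBigO_integral_Ioi_one_exp_neg hp (by linarith : 0 ≤ q - p) ha).congr_right fun h ↦ by
      congr 1
      field_simp
      ring
  refine ((isBigO_setIntegral_exp_div_sub_exp_neg hp hpq ha hg hneg hloc).sub htail).congr' ?_ .rfl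
  filter_upwards [self_mem_nhdsWithin] with h (hh : 0 < h)
  have hmodel : IntegrableOn (fun s ↦ exp (-(a / h) * s ^ p)) (Ioi 0) := by
    simpa using integrableOn_rpow_mul_exp_neg_mul_rpow neg_one_lt_zero hp (div_pos ha hh)
  have hexp : IntegrableOn (fun s ↦ exp (g s / h)) (Ioc 0 1) :=
    (hg.div_const h).rexp.integrableOn_Icc.mono_set Ioc_subset_Icc_self
  rw [integral_sub hexp (hmodel.mono_set Ioc_subset_Ioi_self),
    ← integral_exp_neg_div_mul_rpow hp ha hh, ← Ioc_union_Ioi_eq_Ioi zero_le_one,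
    setIntegral_union Ioc_disjoint_Ioi_same measurableSet_Ioi
      (hmodel.mono_set Ioc_subset_Ioi_self) (hmodel.mono_set (Ioi_subset_Ioi zero_le_one)),
    sub_sub]

lemma setIntegral_uIoc_eq_abs_sub_smul {E : Type*} [NormedAddCommGroup E] [NormedSpace ℝ E]
    (F : ℝ → E) (x y : ℝ) :
    ∫ t in Ι x y, F t = |y - x| • ∫ s in Ioc 0 1, F ((y - x) * s + x) := by
  have hsub := intervalIntegral.smul_integral_comp_mul_add (a := 0) (b := 1) F (y - x) x
  rw [intervalIntegral.integral_of_le zero_le_one, mul_zero, zero_add, mul_one,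
    sub_add_cancel, intervalIntegral.intervalIntegral_eq_integral_uIoc] at hsub
  rcases le_total x y with hxy | hyx
  · rw [abs_of_nonneg (sub_nonneg.2 hxy), hsub, if_pos hxy, one_smul]
  · rcases hyx.eq_or_lt with rfl | hyx
    · simp
    · rw [abs_of_neg (sub_neg.2 hyx), neg_smul, hsub, if_neg hyx.not_ge, neg_one_smul, neg_neg]

lemma mul_add_mem_uIcc {x y s : ℝ} (hs : s ∈ Icc (0 : ℝ) 1) : (y - x) * s + x ∈ [[x, y]] := by
  rw [← segment_eq_uIcc, segment_eq_image']
  exact ⟨s, hs, by simp only [smul_eq_mul]; ring⟩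

lemma isBigO_comp_mul_add_nhdsGT {f : ℝ → ℝ} {x y C : ℝ}
    (hloc : (fun t ↦ f t - C + a * |t - x| ^ p) =O[𝓝[[[x, y]]] x] fun t ↦ |t - x| ^ q) :
    (fun s ↦ f ((y - x) * s + x) - C + a * |y - x| ^ p * s ^ p) =O[𝓝[>] 0] fun s ↦ s ^ q := by
  have hline : Tendsto (fun s ↦ (y - x) * s + x) (𝓝[>] 0) (𝓝[[[x, y]]] x) := by
    refine tendsto_nhdsWithin_iff.2 ⟨tendsto_nhdsWithin_of_tendsto_nhds ?_, ?_⟩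
    · exact Continuous.tendsto' (by fun_prop) 0 x (by ring)
    · filter_upwards [Ioc_mem_nhdsGT one_pos] with s hs
      exact mul_add_mem_uIcc (Ioc_subset_Icc_self hs)
  have hpow (r : ℝ) : ∀ᶠ s in 𝓝[>] (0 : ℝ), |(y - x) * s + x - x| ^ r = |y - x| ^ r * s ^ r := by
    filter_upwards [self_mem_nhdsWithin] with s (hs : 0 < s)
    rw [add_sub_cancel_right, abs_mul, abs_of_pos hs, mul_rpow (abs_nonneg _) hs.le]
  refine ((hloc.comp_tendsto hline).congr' ?_ (hpow q)).trans (isBigO_const_mul_self _ _ _)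
  filter_upwards [hpow p] with s hs
  simp only [Function.comp_apply, hs, mul_assoc]

theorem isBigO_setIntegral_uIoc_exp_div_sub_Gamma_mul {f : ℝ → ℝ} {x₀ b : ℝ} (hp : 0 < p)
    (hpq : p < q) (ha : 0 < a) (hb : b ≠ x₀) (hf : ContinuousOn f [[x₀, b]])
    (hlt : ∀ t ∈ [[x₀, b]], t ≠ x₀ → f t < f x₀)
    (hloc : (fun t ↦ f t - f x₀ + a * |t - x₀| ^ p) =O[𝓝[[[x₀, b]]] x₀] fun t ↦ |t - x₀| ^ q) :
    (fun h ↦ (∫ t in Ι x₀ b, exp ((f t - f x₀) / h)) - Gamma (1 / p + 1) * (h / a) ^ (1 / p))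
      =O[𝓝[>] 0] fun h : ℝ ↦ h ^ ((q + 1) / p - 1) := by
  have hd : 0 < |b - x₀| := abs_pos.2 (sub_ne_zero.2 hb)
  have hneg : ∀ s ∈ Ioc (0 : ℝ) 1, f ((b - x₀) * s + x₀) - f x₀ < 0 := fun s hs ↦
    sub_neg.2 <| hlt _ (mul_add_mem_uIcc (Ioc_subset_Icc_self hs)) <| by
      simpa using ⟨sub_ne_zero.2 hb, hs.1.ne'⟩
  refine ((isBigO_setIntegral_exp_div_sub_Gamma_mul hp hpq (by positivity)
    ((hf.comp (by fun_prop) fun s ↦ mul_add_mem_uIcc).sub continuousOn_const) hneg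
    (isBigO_comp_mul_add_nhdsGT hloc)).const_mul_left |b - x₀|).congr' ?_ .rfl
  filter_upwards [self_mem_nhdsWithin] with h (hh : 0 < h)
  have hscale : |b - x₀| * (h / (a * |b - x₀| ^ p)) ^ (1 / p) = (h / a) ^ (1 / p) := by
    rw [← div_div, div_rpow (by positivity) (by positivity), ← rpow_mul hd.le,
      mul_one_div_cancel hp.ne', rpow_one, mul_div_cancel₀ _ hd.ne']
  rw [mul_sub, setIntegral_uIoc_eq_abs_sub_smul, smul_eq_mul, mul_left_comm |b - x₀|, hscale]
  rfl

end LaplaceMethod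

section Taylor

variable {E : Type*} [NormedAddCommGroup E] [NormedSpace ℝ E] {f : ℝ → E} {s : Set ℝ} {x₀ : ℝ}

lemma isBigO_sub_taylorWithinEval {n : ℕ} (hs : Convex ℝ s) (hx₀ : x₀ ∈ s)
    (hf : ContDiffOn ℝ (n + 1) f s) :
    (fun x ↦ f x - taylorWithinEval f n s x₀ x) =O[𝓝[s] x₀] fun x ↦ (x - x₀) ^ (n + 1) := by
  have hterm : (fun x ↦ (((n + 1) * n.factorial : ℝ)⁻¹ * (x - x₀) ^ (n + 1)) •
      iteratedDerivWithin (n + 1) f s x₀) =O[𝓝[s] x₀] fun x ↦ (x - x₀) ^ (n + 1) := by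
    simpa using (isBigO_const_mul_self ((n + 1) * n.factorial : ℝ)⁻¹ _ _).smul
      (isBigO_const_const (iteratedDerivWithin (n + 1) f s x₀) (one_ne_zero (α := ℝ)) (𝓝[s] x₀))
  refine ((taylor_isLittleO hs hx₀ (n := n + 1) (by exact_mod_cast hf)).isBigO.add
    hterm).congr_left fun x ↦ ?_
  rw [taylorWithinEval_succ]
  abel

lemma isBigO_sub_sub_smul_derivWithin (hs : Convex ℝ s) (hx₀ : x₀ ∈ s)
    (hf : ContDiffOn ℝ 2 f s) :
    (fun x ↦ f x - f x₀ - (x - x₀) • derivWithin f s x₀) =O[𝓝[s] x₀] fun x ↦ (x - x₀) ^ 2 := by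
  refine (isBigO_sub_taylorWithinEval (n := 1) hs hx₀ (by norm_num; exact hf)).congr_left
    fun x ↦ ?_
  simp [taylorWithinEval_succ, sub_sub]

lemma isBigO_sub_sub_smul_derivWithin_derivWithin (hs : Convex ℝ s) (hx₀ : x₀ ∈ s)
    (hf : ContDiffOn ℝ 3 f s) (hcrit : derivWithin f s x₀ = 0) :
    (fun x ↦ f x - f x₀ - ((x - x₀) ^ 2 / 2) • derivWithin (derivWithin f s) s x₀)
      =O[𝓝[s] x₀] fun x ↦ (x - x₀) ^ 3 := by
  refine (isBigO_sub_taylorWithinEval (n := 2) hs hx₀ (by norm_num; exact hf)).congr_left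
    fun x ↦ ?_
  rw [taylorWithinEval_succ, taylorWithinEval_succ, taylor_within_zero_eval, zero_add,
    iteratedDerivWithin_one, iteratedDerivWithin_succ, iteratedDerivWithin_one, hcrit]
  norm_num [sub_sub, div_eq_inv_mul]

end Taylor

section ContDiffOn

variable {f : ℝ → ℝ} {s : Set ℝ} {x₀ b : ℝ}

theorem isBigO_setIntegral_exp_div_sub_div_abs_derivWithin (hs : Convex ℝ s)
    (hsub : [[x₀, b]] ⊆ s) (hf : ContDiffOn ℝ 2 f s)
    (hlt : ∀ t ∈ [[x₀, b]], t ≠ x₀ → f t < f x₀) (hderiv : derivWithin f s x₀ * (b - x₀) < 0) :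
    (fun h ↦ (∫ t in Ι x₀ b, exp ((f t - f x₀) / h)) - h / |derivWithin f s x₀|)
      =O[𝓝[>] 0] fun h : ℝ ↦ h ^ 2 := by
  have hd : derivWithin f s x₀ ≠ 0 := left_ne_zero_of_mul hderiv.ne
  have hb : b - x₀ ≠ 0 := right_ne_zero_of_mul hderiv.ne
  have hsign : ∀ t ∈ [[x₀, b]],
      |derivWithin f s x₀| * |t - x₀| = -((t - x₀) * derivWithin f s x₀) := by
    intro t ht
    rw [← abs_mul, mul_comm, abs_of_nonpos]
    rcases (sub_ne_zero.1 hb).lt_or_gt with h | h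
    · rw [uIcc_of_gt h] at ht
      nlinarith [ht.2]
    · rw [uIcc_of_lt h] at ht
      nlinarith [ht.1]
  have hloc : (fun t ↦ f t - f x₀ + |derivWithin f s x₀| * |t - x₀| ^ (1 : ℝ))
      =O[𝓝[[[x₀, b]]] x₀] fun t ↦ |t - x₀| ^ (2 : ℝ) := by
    refine ((isBigO_sub_sub_smul_derivWithin hs (hsub left_mem_uIcc) hf).mono
      (nhdsWithin_mono _ hsub)).congr' ?_ (.of_forall fun t ↦ ?_)
    · filter_upwards [self_mem_nhdsWithin] with t ht
      rw [rpow_one, hsign t ht, smul_eq_mul, ← sub_eq_add_neg]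
    · simp
  refine (isBigO_setIntegral_uIoc_exp_div_sub_Gamma_mul one_pos one_lt_two (abs_pos.2 hd)
    (sub_ne_zero.1 hb) (hf.continuousOn.mono hsub) hlt hloc).congr
    (fun h ↦ ?_) fun h ↦ ?_ <;>
    norm_num

lemma isBigO_setIntegral_exp_div_sub_half_sqrt (hs : Convex ℝ s) (hsub : [[x₀, b]] ⊆ s)
    (hf : ContDiffOn ℝ 3 f s) (hlt : ∀ t ∈ [[x₀, b]], t ≠ x₀ → f t < f x₀) (hb : b ≠ x₀)
    (hcrit : derivWithin f s x₀ = 0) (hderiv₂ : derivWithin (derivWithin f s) s x₀ < 0) :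
    (fun h ↦ (∫ t in Ι x₀ b, exp ((f t - f x₀) / h)) -
        √(2 * π / |derivWithin (derivWithin f s) s x₀|) / 2 * √h)
      =O[𝓝[>] 0] fun h : ℝ ↦ h := by
  set d := |derivWithin (derivWithin f s) s x₀| with hd
  have hd₀ : 0 < d := abs_pos.2 hderiv₂.ne
  have hloc : (fun t ↦ f t - f x₀ + d / 2 * |t - x₀| ^ (2 : ℝ))
      =O[𝓝[[[x₀, b]]] x₀] fun t ↦ |t - x₀| ^ (3 : ℝ) := by
    refine ((isBigO_sub_sub_smul_derivWithin_derivWithin hs (hsub left_mem_uIcc) hf hcrit).mono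
      (nhdsWithin_mono _ hsub)).abs_right.congr (fun t ↦ ?_) fun t ↦ ?_
    · rw [hd, abs_of_neg hderiv₂, rpow_two, sq_abs, smul_eq_mul]
      ring
    · rw [abs_pow]
      norm_cast
  refine (isBigO_setIntegral_uIoc_exp_div_sub_Gamma_mul two_pos (by norm_num) (half_pos hd₀)
    hb (hf.continuousOn.mono hsub) hlt hloc).congr (fun h ↦ ?_) fun h ↦ by norm_num
  have hGamma : Gamma (1 / 2 + 1) = √π / 2 := by
    rw [Gamma_add_one one_half_pos.ne', Gamma_one_half_eq, one_div_mul_eq_div]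
  rw [hGamma, ← sqrt_eq_rpow, div_mul_eq_mul_div, ← sqrt_mul pi_pos.le, div_mul_eq_mul_div,
    ← sqrt_mul (by positivity)]
  congr 3
  field_simp

theorem isBigO_integral_exp_div_sub_sqrt {x y z : ℝ} (hs : Convex ℝ s) (hsub : Icc x y ⊆ s)
    (hf : ContDiffOn ℝ 3 f s) (hz : z ∈ Ioo x y) (hlt : ∀ t ∈ Icc x y, t ≠ z → f t < f z)
    (hderiv₂ : derivWithin (derivWithin f s) s z < 0) :
    (fun h ↦ (∫ t in x..y, exp ((f t - f z) / h)) -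
        √(2 * π / |derivWithin (derivWithin f s) s z|) * √h)
      =O[𝓝[>] 0] fun h : ℝ ↦ h := by
  have hnhds : Icc x y ∈ 𝓝 z := Icc_mem_nhds hz.1 hz.2
  have hcrit : derivWithin f s z = 0 := by
    have hmax : IsLocalMax f z := by
      filter_upwards [hnhds] with t ht
      rcases eq_or_ne t z with rfl | htz
      exacts [le_rfl, (hlt t ht htz).le]
    rw [derivWithin_of_mem_nhds (mem_of_superset hnhds hsub), hmax.deriv_eq_zero]
  have hside (b : ℝ) (hb : b ∈ Icc x y) (hbz : b ≠ z) :=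
    have hzb : [[z, b]] ⊆ Icc x y := uIcc_subset_Icc (Ioo_subset_Icc_self hz) hb
    isBigO_setIntegral_exp_div_sub_half_sqrt hs (hzb.trans hsub) hf
      (fun t ht ↦ hlt t (hzb ht)) hbz hcrit hderiv₂
  have hxy : x ≤ y := (hz.1.trans hz.2).le
  refine ((hside x (left_mem_Icc.2 hxy) hz.1.ne).add
    (hside y (right_mem_Icc.2 hxy) hz.2.ne')).congr_left fun h ↦ ?_
  have hint : ContinuousOn (fun t ↦ exp ((f t - f z) / h)) (Icc x y) :=
    (((hf.continuousOn.mono hsub).sub continuousOn_const).div_const h).rexp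
  rw [uIoc_of_ge hz.1.le, uIoc_of_le hz.2.le, ← intervalIntegral.integral_of_le hz.1.le,
    ← intervalIntegral.integral_of_le hz.2.le,
    ← intervalIntegral.integral_add_adjacent_intervals (b := z)
      ((hint.mono (Icc_subset_Icc_right hz.2.le)).intervalIntegrable_of_Icc hz.1.le)
      ((hint.mono (Icc_subset_Icc_left hz.1.le)).intervalIntegrable_of_Icc hz.2.le)]
  ring

end ContDiffOn

lemma isBigO_div_sub_of_isBigO {ι 𝕜 : Type*} [NormedField 𝕜] {l : Filter ι} {u N D : ι → 𝕜}
    {α β : 𝕜} (hu : Tendsto u l (𝓝 0)) (hu₀ : ∀ᶠ i in l, u i ≠ 0) (hβ : β ≠ 0)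
    (hN : (fun i ↦ N i - α * u i ^ 2) =O[l] fun i ↦ u i ^ 3)
    (hD : (fun i ↦ D i - β * u i) =O[l] fun i ↦ u i ^ 2) :
    (fun i ↦ N i / D i - α / β * u i) =O[l] fun i ↦ u i ^ 2 := by
  have hequiv : IsEquivalent l D fun i ↦ β * u i :=
    (hD.trans_isLittleO ((isLittleO_pow_id one_lt_two).comp_tendsto hu)).const_mul_right hβ
  have hD₀ : ∀ᶠ i in l, D i ≠ 0 := by
    filter_upwards [hequiv.isTheta.eq_zero_iff, hu₀] with i hi hui
    rw [Ne, hi]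
    exact mul_ne_zero hβ hui
  have hDinv : (fun i ↦ (D i)⁻¹) =O[l] fun i ↦ (u i)⁻¹ :=
    ((isBigO_self_const_mul hβ u l).trans hequiv.isTheta.2).inv_rev <|
      hu₀.mono fun i hi h ↦ absurd h hi
  have hnum : (fun i ↦ (N i - α * u i ^ 2) - α / β * (u i * (D i - β * u i))) =O[l]
      fun i ↦ u i ^ 3 :=
    hN.sub (.const_mul_left (((isBigO_refl u l).mul hD).congr_right fun i ↦ by ring) _)
  refine (hnum.mul hDinv).congr' ?_ ?_
  · filter_upwards [hD₀] with i hi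
    field_simp
    ring
  · filter_upwards [hu₀] with i hi
    field_simp

lemma isBigO_div_sub_sqrt {N D : ℝ → ℝ} {d β : ℝ} (hβ : β ≠ 0)
    (hN : (fun h ↦ N h - h / d) =O[𝓝[>] 0] fun h ↦ h ^ 2)
    (hD : (fun h ↦ D h - β * √h) =O[𝓝[>] 0] fun h ↦ h) :
    (fun h ↦ N h / D h - (d * β)⁻¹ * √h) =O[𝓝[>] 0] fun h ↦ h := by
  have hsq : ∀ᶠ h in 𝓝[>] (0 : ℝ), √h ^ 2 = h := by
    filter_upwards [self_mem_nhdsWithin] with h (hh : 0 < h) using sq_sqrt hh.le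
  have hsqrt : Tendsto (√·) (𝓝[>] 0) (𝓝 0) :=
    tendsto_nhdsWithin_of_tendsto_nhds (continuous_sqrt.tendsto' 0 0 sqrt_zero)
  have hsqrt₀ : ∀ᶠ h in 𝓝[>] (0 : ℝ), √h ≠ 0 := by
    filter_upwards [self_mem_nhdsWithin] with h hh using (sqrt_pos.2 hh).ne'
  have hN' : (fun h ↦ N h - d⁻¹ * √h ^ 2) =O[𝓝[>] 0] fun h ↦ √h ^ 3 := by
    refine (hN.congr' ?_ ?_).trans
      ((isLittleO_pow_pow (by norm_num : 3 < 4)).comp_tendsto hsqrt).isBigO <;>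
      filter_upwards [hsq] with h hh
    · rw [hh, inv_mul_eq_div]
    · rw [Function.comp_apply, ← hh, ← pow_mul, hh]
  refine (isBigO_div_sub_of_isBigO hsqrt hsqrt₀ hβ hN' (hD.congr' .rfl ?_)).congr' ?_ hsq
  · filter_upwards [hsq] with h hh using hh.symm
  · exact .of_forall fun h ↦ by rw [mul_inv, div_eq_mul_inv]

lemma lt_of_forall_isLocalMax_lt_s16 {f : ℝ → ℝ} {u v : ℝ} (hf : ContinuousOn f (Icc u v))
    (heq : f u = f v) (hmax : ∀ w ∈ Ioo u v, IsLocalMax f w → f w < f u) :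
    ∀ t ∈ Ioo u v, f t < f u := by
  intro t ht
  by_contra! hut
  obtain ⟨c, hc, hcmax⟩ := isCompact_Icc.exists_isMaxOn
    (nonempty_of_mem (Ioo_subset_Icc_self ht)) hf
  have htc : f t ≤ f c := hcmax (Ioo_subset_Icc_self ht)
  have hlocal : ∀ w ∈ Ioo u v, f c ≤ f w → f w < f u := fun w hw hcw ↦
    hmax w hw <| (show IsMaxOn f (Icc u v) w from fun y hy ↦ (hcmax hy).trans hcw).isLocalMax
      (Icc_mem_nhds hw.1 hw.2)
  rcases eq_endpoints_or_mem_Ioo_of_mem_Icc hc with rfl | rfl | hc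
  · exact (hlocal t ht hut).not_ge hut
  · exact (hlocal t ht (heq ▸ hut)).not_ge hut
  · exact (hlocal c hc le_rfl).not_ge (hut.trans htc)

lemma lt_of_setOf_derivWithin_eq_zero_eq {f : ℝ → ℝ} {z₁ z₂ x₁ z x₂ : ℝ}
    (hf : ContinuousOn f (Icc z₁ z₂)) (hz : z ∈ Ioo z₁ z₂)
    (hcrit : {t ∈ Icc z₁ z₂ | derivWithin f (Icc z₁ z₂) t = 0} = {x₁, z, x₂})
    (hx₁ : f x₁ < f z) (hx₂ : f x₂ < f z) (hfz₁ : f z₁ = f z) (hfz₂ : f z₂ = f z) :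
    ∀ t ∈ Ioo z₁ z₂, t ≠ z → f t < f z := by
  have hmax : ∀ w ∈ Ioo z₁ z₂, w ≠ z → IsLocalMax f w → f w < f z := by
    intro w hw hwz hwmax
    have hmem : w ∈ ({x₁, z, x₂} : Set ℝ) := hcrit ▸ ⟨Ioo_subset_Icc_self hw, by
      rw [derivWithin_of_mem_nhds (Icc_mem_nhds hw.1 hw.2), hwmax.deriv_eq_zero]⟩
    rcases hmem with rfl | rfl | rfl
    exacts [hx₁, absurd rfl hwz, hx₂]
  intro t ht htz
  rcases htz.lt_or_gt with htz | htz
  · rw [← hfz₁]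
    refine lt_of_forall_isLocalMax_lt_s16 (hf.mono (Icc_subset_Icc_right hz.2.le)) hfz₁
      (fun w hw ↦ ?_) t ⟨ht.1, htz⟩
    rw [hfz₁]
    exact hmax w ⟨hw.1, hw.2.trans hz.2⟩ hw.2.ne
  · exact lt_of_forall_isLocalMax_lt_s16 (hf.mono (Icc_subset_Icc_left hz.1.le)) hfz₂.symm
      (fun w hw ↦ hmax w ⟨hz.1.trans hw.1, hw.2⟩ hw.1.ne') t ⟨htz, ht.2⟩

lemma exists_forall_lt_abs_le_of_isBigO {g : ℝ → ℝ} (hg : g =O[𝓝[>] 0] fun h ↦ h) :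
    ∃ C > 0, ∃ h₀ > 0, ∀ h, 0 < h → h < h₀ → |g h| ≤ C * h := by
  obtain ⟨C, hC, hgC⟩ := hg.exists_pos
  obtain ⟨h₀, hh₀, hle⟩ := (nhdsGT_basis 0).eventually_iff.1 hgC.bound
  exact ⟨C, hC, h₀, hh₀, fun h hh hlt ↦ by simpa [abs_of_pos hh] using hle ⟨hh, hlt⟩⟩

lemma integral_exp_two_mul_div_div_integral (f : ℝ → ℝ) (a b c d C h : ℝ) :
    (∫ t in a..b, exp (2 * f t / h)) / ∫ t in c..d, exp (2 * f t / h) =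
      (∫ t in a..b, exp ((f t - C) / (h / 2))) / ∫ t in c..d, exp ((f t - C) / (h / 2)) := by
  have hfactor : ∀ t, exp (2 * f t / h) = exp (C / (h / 2)) * exp ((f t - C) / (h / 2)) :=
    fun t ↦ by rw [← exp_add]; ring_nf
  simp only [hfactor, intervalIntegral.integral_const_mul]
  exact mul_div_mul_left _ _ (exp_ne_zero _)

lemma inv_mul_sqrt_mul_sqrt_half (a b h : ℝ) :
    (a * √(2 * π / b))⁻¹ * √(h / 2) = √b / (2 * a * √π) * √h := by
  rw [sqrt_div (by positivity), sqrt_mul zero_le_two, sqrt_div' _ zero_le_two]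
  field_simp
  rw [sq_sqrt zero_le_two]
  ring

section EndpointMaxima

variable {f : ℝ → ℝ} {z₁ z₂ z x : ℝ}

lemma isBigO_integral_exp_div_sub_div_abs_derivWithin_left (hf : ContDiffOn ℝ 2 f (Icc z₁ z₂))
    (hx : x ∈ Ioc z₁ z₂) (hlt : ∀ t ∈ Ioc z₁ x, f t < f z₁)
    (hderiv : derivWithin f (Icc z₁ z₂) z₁ < 0) :
    (fun h ↦ (∫ t in z₁..x, exp ((f t - f z₁) / h)) - h / |derivWithin f (Icc z₁ z₂) z₁|)
      =O[𝓝[>] 0] fun h : ℝ ↦ h ^ 2 := by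
  have hcore := isBigO_setIntegral_exp_div_sub_div_abs_derivWithin (b := x) (convex_Icc z₁ z₂)
    ((uIcc_of_le hx.1.le).trans_subset (Icc_subset_Icc_right hx.2)) hf
    (fun t ht htz ↦ by
      rw [uIcc_of_le hx.1.le] at ht
      exact hlt t ⟨ht.1.lt_of_ne' htz, ht.2⟩)
    (mul_neg_of_neg_of_pos hderiv (sub_pos.2 hx.1))
  simpa only [intervalIntegral.integral_of_le hx.1.le, uIoc_of_le hx.1.le] using hcore

lemma isBigO_integral_exp_div_sub_div_abs_derivWithin_right (hf : ContDiffOn ℝ 2 f (Icc z₁ z₂))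
    (hx : x ∈ Ico z₁ z₂) (hlt : ∀ t ∈ Ico x z₂, f t < f z₂)
    (hderiv : 0 < derivWithin f (Icc z₁ z₂) z₂) :
    (fun h ↦ (∫ t in x..z₂, exp ((f t - f z₂) / h)) - h / |derivWithin f (Icc z₁ z₂) z₂|)
      =O[𝓝[>] 0] fun h : ℝ ↦ h ^ 2 := by
  have hcore := isBigO_setIntegral_exp_div_sub_div_abs_derivWithin (b := x) (convex_Icc z₁ z₂)
    ((uIcc_of_ge hx.2.le).trans_subset (Icc_subset_Icc_left hx.1)) hf
    (fun t ht htz ↦ by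
      rw [uIcc_of_ge hx.2.le] at ht
      exact hlt t ⟨ht.1, ht.2.lt_of_ne htz⟩)
    (mul_neg_of_pos_of_neg hderiv (sub_neg.2 hx.2))
  simpa only [intervalIntegral.integral_of_le hx.2.le, uIoc_of_ge hx.2.le] using hcore

lemma isBigO_self_of_sub_div_isBigO_sq {F : ℝ → ℝ} {d : ℝ}
    (hF : (fun h ↦ F h - h / d) =O[𝓝[>] 0] fun h ↦ h ^ 2) : F =O[𝓝[>] 0] fun h ↦ h := by
  have hsq : (fun h : ℝ ↦ h ^ 2) =O[𝓝[>] 0] fun h ↦ h :=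
    ((isLittleO_pow_id one_lt_two).mono nhdsWithin_le_nhds).isBigO
  refine ((hF.trans hsq).add (isBigO_const_mul_self d⁻¹ _ _)).congr_left fun h ↦ ?_
  ring

theorem isBigO_integral_exp_div_sub_sqrt_of_eq_endpoints (hf : ContDiffOn ℝ 3 f (Icc z₁ z₂))
    (hz : z ∈ Ioo z₁ z₂) (hlt : ∀ t ∈ Ioo z₁ z₂, t ≠ z → f t < f z) (hfz₁ : f z₁ = f z)
    (hfz₂ : f z₂ = f z) (hf'' : derivWithin (derivWithin f (Icc z₁ z₂)) (Icc z₁ z₂) z < 0)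
    (hf'z₁ : derivWithin f (Icc z₁ z₂) z₁ < 0) (hf'z₂ : 0 < derivWithin f (Icc z₁ z₂) z₂) :
    (fun h ↦ (∫ t in z₁..z₂, exp ((f t - f z) / h)) -
        √(2 * π / |derivWithin (derivWithin f (Icc z₁ z₂)) (Icc z₁ z₂) z|) * √h)
      =O[𝓝[>] 0] fun h : ℝ ↦ h := by
  obtain ⟨m, hm₁, hm₂⟩ := exists_between hz.1
  obtain ⟨y, hy₁, hy₂⟩ := exists_between hz.2
  have hm : m ∈ Icc z₁ z₂ := ⟨hm₁.le, (hm₂.trans hz.2).le⟩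
  have hy : y ∈ Icc z₁ z₂ := ⟨(hz.1.trans hy₁).le, hy₂.le⟩
  have hf₂ : ContDiffOn ℝ 2 f (Icc z₁ z₂) := hf.of_le (by norm_num)
  have hleft : (fun h ↦ ∫ t in z₁..m, exp ((f t - f z) / h)) =O[𝓝[>] 0] fun h : ℝ ↦ h := by
    rw [← hfz₁]
    exact isBigO_self_of_sub_div_isBigO_sq <|
      isBigO_integral_exp_div_sub_div_abs_derivWithin_left hf₂ ⟨hm₁, hm.2⟩
        (fun t ht ↦ hfz₁ ▸ hlt t ⟨ht.1, ht.2.trans_lt (hm₂.trans hz.2)⟩ (ht.2.trans_lt hm₂).ne)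
        hf'z₁
  have hmid := isBigO_integral_exp_div_sub_sqrt (convex_Icc z₁ z₂)
    (Icc_subset_Icc hm₁.le hy₂.le) hf ⟨hm₂, hy₁⟩
    (fun t ht ↦ hlt t ⟨hm₁.trans_le ht.1, ht.2.trans_lt hy₂⟩) hf''
  have hright : (fun h ↦ ∫ t in y..z₂, exp ((f t - f z) / h)) =O[𝓝[>] 0] fun h : ℝ ↦ h := by
    rw [← hfz₂]
    exact isBigO_self_of_sub_div_isBigO_sq <|
      isBigO_integral_exp_div_sub_div_abs_derivWithin_right hf₂ ⟨hy.1, hy₂⟩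
        (fun t ht ↦ hfz₂ ▸ hlt t ⟨(hz.1.trans hy₁).trans_le ht.1, ht.2⟩ (hy₁.trans_le ht.1).ne')
        hf'z₂
  refine ((hleft.add hmid).add hright).congr_left fun h ↦ ?_
  have hint {u v : ℝ} (hu : u ∈ Icc z₁ z₂) (hv : v ∈ Icc z₁ z₂) :
      IntervalIntegrable (fun t ↦ exp ((f t - f z) / h)) volume u v :=
    (((hf.continuousOn.mono (uIcc_subset_Icc hu hv)).sub continuousOn_const).div_const
      h).rexp.intervalIntegrable
  have hzz : z₁ ≤ z₂ := (hz.1.trans hz.2).le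
  rw [← intervalIntegral.integral_add_adjacent_intervals (hint (left_mem_Icc.2 hzz) hy)
      (hint hy (right_mem_Icc.2 hzz)),
    ← intervalIntegral.integral_add_adjacent_intervals (hint (left_mem_Icc.2 hzz) hm)
      (hint hm hy)]
  ring

theorem stmt16_general (hf : ContDiffOn ℝ 3 f (Icc z₁ z₂))
    (hz : z ∈ Ioo z₁ z₂) (hlt : ∀ t ∈ Ioo z₁ z₂, t ≠ z → f t < f z) (hfz₁ : f z₁ = f z)
    (hfz₂ : f z₂ = f z) (hf'' : derivWithin (derivWithin f (Icc z₁ z₂)) (Icc z₁ z₂) z < 0)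
    (hf'z₁ : derivWithin f (Icc z₁ z₂) z₁ < 0) (hf'z₂ : 0 < derivWithin f (Icc z₁ z₂) z₂)
    (hx : x ∈ Ioo z₁ z) :
    (fun h ↦ (∫ t in z₁..x, exp (2 * f t / h)) / (∫ t in z₁..z₂, exp (2 * f t / h)) -
        √|derivWithin (derivWithin f (Icc z₁ z₂)) (Icc z₁ z₂) z| /
          (2 * |derivWithin f (Icc z₁ z₂) z₁| * √π) * √h)
      =O[𝓝[>] 0] fun h : ℝ ↦ h := by
  have hxz₂ : x < z₂ := hx.2.trans hz.2
  have hnum : (fun h ↦ (∫ t in z₁..x, exp ((f t - f z) / h)) - h / |derivWithin f (Icc z₁ z₂) z₁|)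
      =O[𝓝[>] 0] fun h : ℝ ↦ h ^ 2 := by
    rw [← hfz₁]
    exact isBigO_integral_exp_div_sub_div_abs_derivWithin_left (hf.of_le (by norm_num))
      ⟨hx.1, hxz₂.le⟩
      (fun t ht ↦ hfz₁ ▸ hlt t ⟨ht.1, ht.2.trans_lt hxz₂⟩ (ht.2.trans_lt hx.2).ne) hf'z₁
  have hden :=
    isBigO_integral_exp_div_sub_sqrt_of_eq_endpoints hf hz hlt hfz₁ hfz₂ hf'' hf'z₁ hf'z₂
  have hd : 0 < |derivWithin (derivWithin f (Icc z₁ z₂)) (Icc z₁ z₂) z| := abs_pos.2 hf''.ne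
  have hratio := isBigO_div_sub_sqrt (by positivity) hnum hden
  have hhalf : Tendsto (fun h : ℝ ↦ h / 2) (𝓝[>] 0) (𝓝[>] 0) :=
    tendsto_nhdsWithin_iff.2 ⟨tendsto_nhdsWithin_of_tendsto_nhds <|
      Continuous.tendsto' (by fun_prop) 0 0 (zero_div 2),
      eventually_mem_nhdsWithin.mono fun h hh ↦ mem_Ioi.2 (half_pos hh)⟩
  refine ((hratio.comp_tendsto hhalf).congr_left fun h ↦ ?_).trans
    ((isBigO_const_mul_self 2⁻¹ _ _).congr_left fun h ↦ inv_mul_eq_div 2 h)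
  simp only [Function.comp_apply, inv_mul_sqrt_mul_sqrt_half,
    integral_exp_two_mul_div_div_integral f _ _ _ _ (f z)]

end EndpointMaxima

/-- Assertion (1.17) of Section 1.4.5 of the paper via the explicit one-dimensional exit
law: when assumption (A4) fails, the relative weight of `(z₁, x)` is exactly of order
`√h`, with explicit constant `√|f''(z)| / (2 |f'(z₁)| √π)`. -/
theorem stmt16 (z₁ z₂ x₁ z x₂ : ℝ) (hz : z₁ < z₂)
    (f : ℝ → ℝ) (hf : ContDiffOn ℝ (⊤ : ℕ∞) f (Set.Icc z₁ z₂))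
    (h₁ : z₁ < x₁) (h₂ : x₁ < z) (h₃ : z < x₂) (h₄ : x₂ < z₂)
    (hcrit : {t ∈ Set.Icc z₁ z₂ | derivWithin f (Set.Icc z₁ z₂) t = 0} = {x₁, z, x₂})
    (hv1 : f x₁ < f x₂) (hv2 : f x₂ < f z) (hv3 : f z = f z₁) (hv4 : f z₁ = f z₂)
    (hf'' : derivWithin (derivWithin f (Set.Icc z₁ z₂)) (Set.Icc z₁ z₂) z < 0)
    (hf'z₁ : derivWithin f (Set.Icc z₁ z₂) z₁ < 0)
    (hf'z₂ : 0 < derivWithin f (Set.Icc z₁ z₂) z₂) :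
    ∀ x ∈ Set.Ioo z₁ z, ∃ C > 0, ∃ h₀ > 0, ∀ h : ℝ, 0 < h → h < h₀ →
      |(∫ t in z₁..x, Real.exp (2 * f t / h)) /
          (∫ t in z₁..z₂, Real.exp (2 * f t / h)) -
        Real.sqrt |derivWithin (derivWithin f (Set.Icc z₁ z₂)) (Set.Icc z₁ z₂) z| /
          (2 * |derivWithin f (Set.Icc z₁ z₂) z₁| * Real.sqrt Real.pi) * Real.sqrt h| ≤
        C * h := fun _ hx ↦
  have hz' : z ∈ Set.Ioo z₁ z₂ := ⟨h₁.trans h₂, h₃.trans h₄⟩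
  exists_forall_lt_abs_le_of_isBigO <| stmt16_general (contDiffOn_infty.1 hf 3) hz'
    (lt_of_setOf_derivWithin_eq_zero_eq hf.continuousOn hz' hcrit (hv1.trans hv2) hv2 hv3.symm
      (hv3.trans hv4).symm) hv3.symm (hv3.trans hv4).symm hf'' hf'z₁ hf'z₂ hx
end
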